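/- The maps DTS and DTR are each bijections from the set of integer sequences (p_1,…,p_n) with 0 ≤ p_i ≤ 2(i−1) for all i onto the set of cover-inclusive Dyck tilings of order n. -/

import Mathlib

open Finset

noncomputable section

/-- A Dyck path of order `n`: a word of `2n` steps (`true` = up-step `(+1,+1)`,
`false` = down-step `(+1,-1)`) from `(-n,0)` to `(n,0)` staying weakly above the x-axis. -/
structure DyckPath (n : ℕ) where
  step : Fin (2 * n) → Bool
  balanced : (Finset.univ.filter fun i => step i = true).card = n
  nonneg : ∀ k : ℕ, k ≤ 2 * n →
    (Finset.univ.filter fun i : Fin (2 * n) => (i : ℕ) < k ∧ step i = false).card ≤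
      (Finset.univ.filter fun i : Fin (2 * n) => (i : ℕ) < k ∧ step i = true).card

namespace DyckPath

/-- Height of the path above column `x` (columns run from `-n` to `n`). -/
def ht {n : ℕ} (P : DyckPath n) (x : ℤ) : ℤ :=
  ((Finset.univ.filter fun i : Fin (2 * n) => ((i : ℕ) : ℤ) < x + n ∧ P.step i = true).card : ℤ) -
    ((Finset.univ.filter fun i : Fin (2 * n) => ((i : ℕ) : ℤ) < x + n ∧ P.step i = false).card : ℤ)

/-- Height of the path at lattice point number `k`, `0 ≤ k ≤ 2n`
(point `k` lies at column `k - n`). -/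
def pt {n : ℕ} (P : DyckPath n) (k : ℕ) : ℤ := P.ht ((k : ℤ) - n)

end DyckPath

/-- `IsChord P p q`: the up-step at (0-indexed) position `p` matches the down-step at
position `q`, forming a chord of `P`. -/
def IsChord {n : ℕ} (P : DyckPath n) (p q : ℕ) : Prop :=
  p < q ∧ q < 2 * n ∧
    (∃ hp : p < 2 * n, P.step ⟨p, hp⟩ = true) ∧
    (∃ hq : q < 2 * n, P.step ⟨q, hq⟩ = false) ∧
    P.pt (q + 1) = P.pt p ∧
    ∀ m : ℕ, p < m → m ≤ q → P.pt p < P.pt m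

/-- A natural labeling of the chord poset of `P`: the chord labeled `i` has its up-step at
(0-indexed) position `l i` and matching down-step at position `r i`; distinct labels name
distinct chords; and if one chord is nested inside another it receives a larger label. -/
structure ChordLabeling {n : ℕ} (P : DyckPath n) where
  l : Fin n → ℕ
  r : Fin n → ℕ
  chord : ∀ i, IsChord P (l i) (r i)
  inj : Function.Injective l
  natural : ∀ i j : Fin n, l j < l i → r i < r j → j < i

/-- The length of the chord labeled `i`: the number of up steps of `P` between and
including its two endpoints. -/
def chordLen {n : ℕ} {P : DyckPath n} (C : ChordLabeling P) (i : Fin n) : ℕ :=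
  (Finset.univ.filter fun m : Fin (2 * n) =>
    C.l i ≤ (m : ℕ) ∧ (m : ℕ) ≤ C.r i ∧ P.step m = true).card

/-- The growth sequence `p_1, …, p_n` associated with a natural chord labeling:
`p i = #{j<i : l j < l i} + #{j<i : r j < l i}`. -/
def seqOf {n : ℕ} {P : DyckPath n} (C : ChordLabeling P) (i : Fin n) : ℕ :=
  (Finset.univ.filter fun j : Fin n => j < i ∧ C.l j < C.l i).card +
    (Finset.univ.filter fun j : Fin n => j < i ∧ C.r j < C.l i).card

/-- `σ` is the standardization of the word `w` (with distinct letters). -/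
def IsStandardization {n : ℕ} (w : Fin n → ℕ) (σ : Equiv.Perm (Fin n)) : Prop :=
  ∀ i j : Fin n, σ i < σ j ↔ w i < w j

/-- `σ ∈ 𝓛(P_λ)`: σ is `L₀ ∘ L⁻¹` for some natural labeling `L` of the chord poset,
equivalently the standardization of the word of left endpoints of a natural labeling. -/
def LinExt {n : ℕ} (P : DyckPath n) (σ : Equiv.Perm (Fin n)) : Prop :=
  ∃ C : ChordLabeling P, IsStandardization C.l σ

/-- Successor index in `Fin n` (used only under the guard `i+1 < n`). -/
def nextIdx {n : ℕ} (i : Fin n) : Fin n := ⟨((i : ℕ) + 1) % n, Nat.mod_lt _ i.pos⟩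

/-- Descent set of a word: positions `i` with `i+1 < n` and `w i > w (i+1)`. -/
def descentFinset {n : ℕ} (w : Fin n → ℕ) : Finset (Fin n) :=
  Finset.univ.filter fun i => (i : ℕ) + 1 < n ∧ w (nextIdx i) < w i

/-- Number of inversions of a word. -/
def wordInv {n : ℕ} (w : Fin n → ℕ) : ℕ :=
  (Finset.univ.filter fun p : Fin n × Fin n => p.1 < p.2 ∧ w p.2 < w p.1).card

/-- The word of values of a permutation. -/
def permWord {n : ℕ} (σ : Equiv.Perm (Fin n)) : Fin n → ℕ := fun i => (σ i : ℕ)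

/-- inv(σ). -/
def permInv {n : ℕ} (σ : Equiv.Perm (Fin n)) : ℕ := wordInv (permWord σ)

/-- des(σ). -/
def permDes {n : ℕ} (σ : Equiv.Perm (Fin n)) : ℕ := (descentFinset (permWord σ)).card

/-- `REM_i(w) = {k > i : w i > w k > w (i+1)}`, the right embraced numbers. -/
def remSet {n : ℕ} (w : Fin n → ℕ) (i : Fin n) : Finset (Fin n) :=
  Finset.univ.filter fun k => i < k ∧ w (nextIdx i) < w k ∧ w k < w i

/-- desdif(σ) = Σ_{i ∈ DES σ} (σ i − σ (i+1)). -/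
def desdif {n : ℕ} (σ : Equiv.Perm (Fin n)) : ℕ :=
  ∑ i ∈ descentFinset (permWord σ), (permWord σ i - permWord σ (nextIdx i))

/-- res(σ) = Σ_{i ∈ DES σ} #{k < i : σ i > σ k > σ (i+1)}. -/
def resStat {n : ℕ} (σ : Equiv.Perm (Fin n)) : ℕ :=
  ∑ i ∈ descentFinset (permWord σ),
    (Finset.univ.filter fun k : Fin n =>
      k < i ∧ permWord σ (nextIdx i) < permWord σ k ∧ permWord σ k < permWord σ i).card

/-- The Mahonian statistic mad(σ) = desdif(σ) + res(σ). -/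
def mad {n : ℕ} (σ : Equiv.Perm (Fin n)) : ℕ := desdif σ + resStat σ

/-- σ avoids the pattern 231. -/
def Avoids231 {n : ℕ} (σ : Equiv.Perm (Fin n)) : Prop :=
  ¬∃ i j k : Fin n, i < j ∧ j < k ∧ σ k < σ i ∧ σ i < σ j

/-- The boxes of the skew shape `lam/mu` (with `mu` weakly above `lam`), each box
recorded by its bottom corner (a lattice point `(x, z)` with `z ≡ x + n (mod 2)`). -/
def skewCells {n : ℕ} (lam mu : DyckPath n) : Finset (ℤ × ℤ) :=
  ((Finset.Icc (-(n : ℤ)) n) ×ˢ (Finset.Icc (0 : ℤ) n)).filter fun c =>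
    lam.ht c.1 ≤ c.2 ∧ c.2 + 2 ≤ mu.ht c.1 ∧ (c.2 - c.1 - n) % 2 = 0

/-- A Dyck tile, recorded by the set of bottom corners of its boxes: these form
a Dyck-path shape, i.e. a ±1-step lattice path whose two ends are lowest. -/
def IsDyckTile (t : Finset (ℤ × ℤ)) : Prop :=
  ∃ (a b : ℤ) (f : ℤ → ℤ), a ≤ b ∧
    (∀ x : ℤ, a ≤ x → x < b → f (x + 1) = f x + 1 ∨ f (x + 1) = f x - 1) ∧
    f b = f a ∧ (∀ x : ℤ, a ≤ x → x ≤ b → f a ≤ f x) ∧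
    t = (Finset.Icc a b).image fun x => (x, f x)

/-- A Dyck tiling of order `n`: a tiling of the skew shape between two Dyck paths of
order `n` by Dyck tiles. -/
structure DyckTiling (n : ℕ) where
  lower : DyckPath n
  upper : DyckPath n
  below : ∀ x : ℤ, lower.ht x ≤ upper.ht x
  tiles : Finset (Finset (ℤ × ℤ))
  isDyck : ∀ t ∈ tiles, IsDyckTile t
  disj : ∀ t ∈ tiles, ∀ u ∈ tiles, t ≠ u → Disjoint t u
  cover : tiles.biUnion id = skewCells lower upper

namespace DyckTiling

/-- Number of boxes of the skew shape. -/
def area {n : ℕ} (T : DyckTiling n) : ℕ := (skewCells T.lower T.upper).card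

/-- Number of tiles. -/
def numTiles {n : ℕ} (T : DyckTiling n) : ℕ := T.tiles.card

/-- art(T) = (area(T) + tiles(T)) / 2. -/
def art {n : ℕ} (T : DyckTiling n) : ℕ := (T.area + T.numTiles) / 2

/-- dis(T): the number of step positions where the lower path steps down while the
upper path steps up. -/
def dis {n : ℕ} (T : DyckTiling n) : ℕ :=
  (Finset.univ.filter fun i : Fin (2 * n) =>
    T.lower.step i = false ∧ T.upper.step i = true).card

/-- Cover-inclusiveness: whenever a tile has a box strictly above a box of another tile,
its horizontal extent is contained in that of the other tile. -/
def CoverInclusive {n : ℕ} (T : DyckTiling n) : Prop :=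
  ∀ t ∈ T.tiles, ∀ u ∈ T.tiles,
    (∃ p ∈ t, ∃ q ∈ u, (p : ℤ × ℤ).1 = (q : ℤ × ℤ).1 ∧ (q : ℤ × ℤ).2 < (p : ℤ × ℤ).2) →
    ∀ p ∈ t, ∃ y : ℤ, ((p : ℤ × ℤ).1, y) ∈ u

end DyckTiling

/-- Height function of the spread at column `s` of a Dyck path. -/
def spreadHt {n : ℕ} (P : DyckPath n) (s x : ℤ) : ℤ :=
  if x < s then P.ht (x + 1) else if x = s then P.ht s + 1 else P.ht (x - 1)

/-- Spread of a tile at column `s`: points left of `s` move left, points right of `s`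
move right, and a point at column `s` is duplicated upward. -/
def spreadTile (s : ℤ) (t : Finset (ℤ × ℤ)) : Finset (ℤ × ℤ) :=
  ((t.filter fun p => p.1 ≤ s).image fun p => (p.1 - 1, p.2)) ∪
    ((t.filter fun p => p.1 = s).image fun p => (p.1, p.2 + 1)) ∪
    ((t.filter fun p => s ≤ p.1).image fun p => (p.1 + 1, p.2))

/-- Spread of a set of tiles at column `s`. -/
def spreadTiles (s : ℤ) (ts : Finset (Finset (ℤ × ℤ))) : Finset (Finset (ℤ × ℤ)) :=
  ts.image (spreadTile s)

/-- Column `c` is eligible for a tiling with upper-boundary height function `h` and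
tile set `ts`: the upper boundary has an up step ending at column `c`, and its point at
column `c` is not the top corner of a one-box tile. -/
def EligibleCol (h : ℤ → ℤ) (ts : Finset (Finset (ℤ × ℤ))) (c : ℤ) : Prop :=
  h c = h (c - 1) + 1 ∧ ({(c, h c - 2)} : Finset (ℤ × ℤ)) ∉ ts

/-- `T'` is the result of the strip-grow map applied to `(T, s)`: spread `T` at `s` and
add a one-box tile on each up step of the (spread) upper boundary starting at a column
`≥ s` (i.e. strictly to the right of column `s`). -/
def StripGrowRel {n : ℕ} (T : DyckTiling n) (s : ℤ) (T' : DyckTiling (n + 1)) : Prop :=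
  (∀ x : ℤ, T'.lower.ht x = spreadHt T.lower s x) ∧
  (∀ x : ℤ, T'.upper.ht x =
    if s ≤ x ∧ spreadHt T.upper s (x + 1) = spreadHt T.upper s x + 1 then
      spreadHt T.upper s x + 2
    else spreadHt T.upper s x) ∧
  T'.tiles = spreadTiles s T.tiles ∪
    ((Finset.Icc s (n : ℤ)).filter fun x =>
        spreadHt T.upper s (x + 1) = spreadHt T.upper s x + 1).image
      (fun x => ({(x, spreadHt T.upper s x)} : Finset (ℤ × ℤ)))

/-- `T'` is the result of the ribbon-grow map applied to `(T, s)`: spread `T` at `s`,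
and if the special column `Q` of the spread tiling is strictly right of `s`, add a
ribbon of one-box tiles at all columns strictly between `s` and `Q`. -/
def RibbonGrowRel {n : ℕ} (T : DyckTiling n) (s : ℤ) (T' : DyckTiling (n + 1)) : Prop :=
  (∀ x : ℤ, T'.lower.ht x = spreadHt T.lower s x) ∧
  ∃ Q : ℤ,
    EligibleCol (spreadHt T.upper s) (spreadTiles s T.tiles) Q ∧
    (∀ c : ℤ, EligibleCol (spreadHt T.upper s) (spreadTiles s T.tiles) c → c ≤ Q) ∧
    (∀ x : ℤ, T'.upper.ht x =
      if s < x ∧ x < Q then spreadHt T.upper s x + 2 else spreadHt T.upper s x) ∧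
    T'.tiles = spreadTiles s T.tiles ∪
      (Finset.Ioo s Q).image (fun x => ({(x, spreadHt T.upper s x)} : Finset (ℤ × ℤ)))

/-- `s` is the special column of `T`: its rightmost eligible column. -/
def SpecialCol {n : ℕ} (T : DyckTiling n) (s : ℤ) : Prop :=
  EligibleCol T.upper.ht T.tiles s ∧ ∀ c : ℤ, EligibleCol T.upper.ht T.tiles c → c ≤ s

/-- In the strip-shrink map applied to `T'` with special column `s`, a one-box tile is
removed at column `x`: `x` is right of `s` and there is a one-box tile there that is
part of an up step of the upper boundary. -/
def StripRemovedAt {n : ℕ} (T' : DyckTiling n) (s x : ℤ) : Prop :=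
  s < x ∧ T'.upper.ht x = T'.upper.ht (x - 1) + 1 ∧
    ({(x, T'.upper.ht x - 2)} : Finset (ℤ × ℤ)) ∈ T'.tiles

instance {n : ℕ} (T' : DyckTiling n) (s x : ℤ) : Decidable (StripRemovedAt T' s x) := by
  unfold StripRemovedAt; infer_instance

/-- `(T, s)` is the result of the strip-shrink map applied to `T'`: `s` is the special
column of `T'`; all one-box tiles right of `s` lying on up steps of the upper boundary
are removed; and the result is the spread of `T` at `s`. -/
def StripShrinkRel {n : ℕ} (T' : DyckTiling (n + 1)) (T : DyckTiling n) (s : ℤ) : Prop :=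
  SpecialCol T' s ∧
  (∀ x : ℤ, spreadHt T.lower s x = T'.lower.ht x) ∧
  (∀ x : ℤ, spreadHt T.upper s x =
    if StripRemovedAt T' s x then T'.upper.ht x - 2 else T'.upper.ht x) ∧
  spreadTiles s T.tiles =
    T'.tiles \ (((Finset.Ioc s ((n : ℤ) + 1)).filter fun x => StripRemovedAt T' s x).image
      fun x => ({(x, T'.upper.ht x - 2)} : Finset (ℤ × ℤ)))

/-- `(T, s)` is the result of the ribbon-shrink map applied to `T'`: `s` is the special
column of `T'`; the maximal run of topmost one-box tiles in columns `s+1, s+2, …` is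
removed; and the result is the spread of `T` at `s`. -/
def RibbonShrinkRel {n : ℕ} (T' : DyckTiling (n + 1)) (T : DyckTiling n) (s : ℤ) : Prop :=
  SpecialCol T' s ∧
  ∃ r : ℤ, s < r ∧
    (∀ x : ℤ, s < x → x < r → ({(x, T'.upper.ht x - 2)} : Finset (ℤ × ℤ)) ∈ T'.tiles) ∧
    ({(r, T'.upper.ht r - 2)} : Finset (ℤ × ℤ)) ∉ T'.tiles ∧
    (∀ x : ℤ, spreadHt T.lower s x = T'.lower.ht x) ∧
    (∀ x : ℤ, spreadHt T.upper s x =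
      if s < x ∧ x < r then T'.upper.ht x - 2 else T'.upper.ht x) ∧
    spreadTiles s T.tiles =
      T'.tiles \ ((Finset.Ioo s r).image fun x => ({(x, T'.upper.ht x - 2)} : Finset (ℤ × ℤ)))

/-- `IsDTS n p T`: `T` is the Dyck tiling `DTS(p_1, …, p_n)` (indices 0-based, so the
growth column for step `i` is `p i - i`). -/
inductive IsDTS : (n : ℕ) → (Fin n → ℕ) → DyckTiling n → Prop where
  | nil (p : Fin 0 → ℕ) (T : DyckTiling 0) : IsDTS 0 p T
  | cons (n : ℕ) (p : Fin (n + 1) → ℕ) (T : DyckTiling n) (T' : DyckTiling (n + 1)) :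
      IsDTS n (fun i => p i.castSucc) T →
      StripGrowRel T ((p (Fin.last n) : ℤ) - n) T' → IsDTS (n + 1) p T'

/-- `IsDTR n p T`: `T` is the Dyck tiling `DTR(p_1, …, p_n)`. -/
inductive IsDTR : (n : ℕ) → (Fin n → ℕ) → DyckTiling n → Prop where
  | nil (p : Fin 0 → ℕ) (T : DyckTiling 0) : IsDTR 0 p T
  | cons (n : ℕ) (p : Fin (n + 1) → ℕ) (T : DyckTiling n) (T' : DyckTiling (n + 1)) :
      IsDTR n (fun i => p i.castSucc) T →
      RibbonGrowRel T ((p (Fin.last n) : ℤ) - n) T' → IsDTR (n + 1) p T'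

/-- `T = DTS(λ, σ)`. -/
def IsDTSof {n : ℕ} (lam : DyckPath n) (σ : Equiv.Perm (Fin n)) (T : DyckTiling n) : Prop :=
  ∃ C : ChordLabeling lam, IsStandardization C.l σ ∧ IsDTS n (seqOf C) T

/-- `T = DTR(λ, σ)`. -/
def IsDTRof {n : ℕ} (lam : DyckPath n) (σ : Equiv.Perm (Fin n)) (T : DyckTiling n) : Prop :=
  ∃ C : ChordLabeling lam, IsStandardization C.l σ ∧ IsDTR n (seqOf C) T

/-- Increment `a` if it exceeds `p`. -/
def bump (p a : ℕ) : ℕ := if p < a then a + 1 else a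

/-- The perfect matching `match(p_1, …, p_n)` of `{1, …, 2n}`. -/
def matchSeq : (n : ℕ) → (Fin n → ℕ) → Finset (ℕ × ℕ)
  | 0, _ => ∅
  | n + 1, p =>
    ((matchSeq n fun i => p i.castSucc).image fun q =>
      (bump (p (Fin.last n)) q.1, bump (p (Fin.last n)) q.2)) ∪
      {(p (Fin.last n) + 1, 2 * (n + 1))}

/-- The number of nestings of a matching: pairs `(a,b)`, `(c,d)` with `c < a < b < d`. -/
def nestings (M : Finset (ℕ × ℕ)) : ℕ :=
  ((M ×ˢ M).filter fun q => q.2.1 < q.1.1 ∧ q.1.1 < q.1.2 ∧ q.1.2 < q.2.2).card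

/-- `w` is the min-word of `M`: the list of the smaller elements of the pairs of `M`,
sorted by the larger elements. -/
def IsMinWord (n : ℕ) (M : Finset (ℕ × ℕ)) (w : Fin n → ℕ) : Prop :=
  ∃ b : Fin n → ℕ, StrictMono b ∧ (∀ i, w i < b i) ∧
    M = Finset.univ.image fun i => (w i, b i)

/-- The number of tiles of `T` containing boxes over both endpoint columns of the
chord with endpoints at step positions `p < q`. -/
def chordTileCount {n : ℕ} (T : DyckTiling n) (p q : ℕ) : ℕ :=
  (T.tiles.filter fun t =>
    (∃ c ∈ t, (c : ℤ × ℤ).1 = (p : ℤ) + 1 - n) ∧ (∃ c ∈ t, (c : ℤ × ℤ).1 = (q : ℤ) - n)).card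

/-- A Dyck tableau of order `n` over the zigzag path `Z` of order `n+1`: a skew shape
`Z/μ` with `n` dots, one in each column of the skew shape through a valley of `Z`. -/
structure DyckTableau (n : ℕ) (Z : DyckPath (n + 1)) where
  upper : DyckPath (n + 1)
  below : ∀ x : ℤ, Z.ht x ≤ upper.ht x
  dots : Finset (ℤ × ℤ)
  sub : dots ⊆ skewCells Z upper
  card_dots : dots.card = n
  valley : ∀ x : ℤ, Z.ht (x - 1) = Z.ht x + 1 → Z.ht (x + 1) = Z.ht x + 1 →
    (dots.filter fun c => c.1 = x).card = 1

/-- The `q`-integer `[m]_q = 1 + q + ⋯ + q^(m-1)` as a polynomial. -/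
def qint (m : ℕ) : Polynomial ℤ := ∑ i ∈ Finset.range m, Polynomial.X ^ i

/-- The `q`-factorial `[n]_q!`. -/
def qfact (n : ℕ) : Polynomial ℤ := ∏ i ∈ Finset.range n, qint (i + 1)

/-- The height profile of an arbitrary word of `2n` up and down steps. -/
def wordHt {n : ℕ} (step : Fin (2 * n) → Bool) (x : ℤ) : ℤ :=
  ((Finset.univ.filter fun i : Fin (2 * n) => ((i : ℕ) : ℤ) < x + n ∧ step i = true).card : ℤ) -
    ((Finset.univ.filter fun i : Fin (2 * n) => ((i : ℕ) : ℤ) < x + n ∧ step i = false).card : ℤ)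

lemma wordHt_eq_sum {n : ℕ} (step : Fin (2 * n) → Bool) (x : ℤ) :
    wordHt step x = ∑ i : Fin (2 * n),
      if ((i : ℕ) : ℤ) < x + n then (if step i = true then 1 else -1) else 0 := by
  unfold wordHt
  rw [Finset.card_filter, Finset.card_filter]
  push_cast
  rw [← Finset.sum_sub_distrib]
  refine Finset.sum_congr rfl fun i _ => ?_
  cases h : step i <;> by_cases h' : ((i : ℕ) : ℤ) < x + n <;> simp [h']

lemma wordHt_of_le {n : ℕ} (step : Fin (2 * n) → Bool) {x : ℤ} (hx : x ≤ -n) :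
    wordHt step x = 0 := by
  rw [wordHt_eq_sum]
  refine Finset.sum_eq_zero fun i _ => ?_
  rw [if_neg (by omega)]

lemma wordHt_succ {n : ℕ} (step : Fin (2 * n) → Bool) (x : ℤ) (j : Fin (2 * n))
    (hj : (j : ℤ) = x + n) :
    wordHt step (x + 1) = wordHt step x + if step j = true then 1 else -1 := by
  rw [wordHt_eq_sum, wordHt_eq_sum, ← sub_eq_iff_eq_add', ← Finset.sum_sub_distrib,
    Finset.sum_eq_single j]
  · have h1 : (j : ℤ) < x + 1 + n := by omega
    have h2 : ¬ (j : ℤ) < x + n := by omega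
    rw [if_pos h1, if_neg h2, sub_zero]
  · intro i _ hij
    have : (i : ℤ) ≠ j := by exact_mod_cast fun h => hij (Fin.ext h)
    by_cases h : (i : ℤ) < x + n
    · rw [if_pos (by omega), if_pos h, sub_self]
    · rw [if_neg (by omega), if_neg h, sub_self]
  · simp

/-- A height function is the profile of a Dyck path of order `n`, extended by zero. -/
structure IsDyckHt (n : ℕ) (h : ℤ → ℤ) : Prop where
  left : ∀ x : ℤ, x ≤ -n → h x = 0
  right : ∀ x : ℤ, (n : ℤ) ≤ x → h x = 0
  nonneg : ∀ x, 0 ≤ h x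
  step : ∀ x : ℤ, -n ≤ x → x < n → h (x + 1) = h x + 1 ∨ h (x + 1) = h x - 1

namespace DyckPath

lemma ht_of_ge {n : ℕ} (P : DyckPath n) {x : ℤ} (hx : (n : ℤ) ≤ x) : P.ht x = 0 := by
  have h1 := P.balanced
  have h2 := Finset.card_filter_add_card_filter_not (s := (Finset.univ : Finset (Fin (2 * n))))
    (fun i => P.step i = true)
  have e1 : (Finset.univ.filter fun i : Fin (2 * n) =>
      ((i : ℕ) : ℤ) < x + n ∧ P.step i = true) =
      Finset.univ.filter fun i => P.step i = true :=
    Finset.filter_congr fun i _ => and_iff_right (by omega)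
  have e2 : (Finset.univ.filter fun i : Fin (2 * n) =>
      ((i : ℕ) : ℤ) < x + n ∧ P.step i = false) =
      Finset.univ.filter fun i => ¬ P.step i = true :=
    Finset.filter_congr fun i _ => by
      rw [and_iff_right (by omega), Bool.not_eq_true]
  simp only [ht, e1, e2]
  simp only [Finset.card_univ, Fintype.card_fin] at h2
  omega

lemma isDyckHt {n : ℕ} (P : DyckPath n) : IsDyckHt n P.ht where
  left x hx := wordHt_of_le P.step hx
  right x hx := P.ht_of_ge hx
  nonneg x := by
    rcases le_total (n : ℤ) x with hx | hx
    · rw [P.ht_of_ge hx]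
    rcases le_total x (-n) with hx' | hx'
    · exact (wordHt_of_le P.step hx').ge
    have h := P.nonneg (x + n).toNat (by omega)
    have key : ∀ i : Fin (2 * n), ((i : ℕ) < (x + n).toNat ↔ ((i : ℕ) : ℤ) < x + n) := by
      intro i; omega
    simp only [key] at h
    unfold ht
    omega
  step x h1 h2 := by
    have := wordHt_succ P.step x ⟨(x + n).toNat, by omega⟩ (by simp; omega)
    change P.ht (x + 1) = P.ht x + _ at this
    rw [this]
    split_ifs
    · exact Or.inl rfl
    · exact Or.inr rfl

lemma ext_of_ht {n : ℕ} {P R : DyckPath n} (h : ∀ x, P.ht x = R.ht x) : P = R := by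
  have : P.step = R.step := by
    funext j
    have hP := wordHt_succ P.step (j - n) j (by omega)
    have hR := wordHt_succ R.step (j - n) j (by omega)
    have e1 := h (j - n)
    have e2 := h (j - n + 1)
    change P.ht _ = P.ht _ + _ at hP
    change R.ht _ = R.ht _ + _ at hR
    rw [e1, e2, hR] at hP
    cases hp : P.step j <;> cases hr : R.step j <;> simp [hp, hr] at hP ⊢
  cases P; cases R; simpa using this

end DyckPath

lemma IsDyckHt.exists_path {n : ℕ} {h : ℤ → ℤ} (hh : IsDyckHt n h) :
    ∃ P : DyckPath n, ∀ x, P.ht x = h x := by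
  let step : Fin (2 * n) → Bool := fun j => decide (h ((j : ℤ) - n + 1) = h ((j : ℤ) - n) + 1)
  have key : ∀ k : ℕ, k ≤ 2 * n → wordHt step ((k : ℤ) - n) = h ((k : ℤ) - n) := by
    intro k
    induction k with
    | zero => intro _; rw [wordHt_of_le _ (by simp), hh.left _ (by simp)]
    | succ k ih =>
      intro hk
      have h1 := wordHt_succ step ((k : ℤ) - n) ⟨k, by omega⟩ (by simp)
      have h2 := hh.step ((k : ℤ) - n) (by omega) (by omega)
      rw [ih (by omega)] at h1
      have e : ((k + 1 : ℕ) : ℤ) - n = (k : ℤ) - n + 1 := by push_cast; ring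
      rw [e, h1]
      simp only [step, decide_eq_true_eq]
      split_ifs with hc <;> omega
  have hb : (Finset.univ.filter fun i => step i = true).card = n := by
    have h1 := key (2 * n) le_rfl
    rw [hh.right _ (by push_cast; omega)] at h1
    have h2 := Finset.card_filter_add_card_filter_not (s := (Finset.univ : Finset (Fin (2 * n))))
      (fun i => step i = true)
    have e1 : (Finset.univ.filter fun i : Fin (2 * n) =>
        ((i : ℕ) : ℤ) < (((2 * n : ℕ) : ℤ) - n) + n ∧ step i = true) =
        Finset.univ.filter fun i => step i = true :=
      Finset.filter_congr fun i _ => and_iff_right (by omega)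
    have e2 : (Finset.univ.filter fun i : Fin (2 * n) =>
        ((i : ℕ) : ℤ) < (((2 * n : ℕ) : ℤ) - n) + n ∧ step i = false) =
        Finset.univ.filter fun i => ¬ step i = true :=
      Finset.filter_congr fun i _ => by
        rw [and_iff_right (by omega), Bool.not_eq_true]
    simp only [wordHt, e1, e2] at h1
    simp only [Finset.card_univ, Fintype.card_fin] at h2
    omega
  have hn : ∀ k : ℕ, k ≤ 2 * n →
      (Finset.univ.filter fun i : Fin (2 * n) => (i : ℕ) < k ∧ step i = false).card ≤
        (Finset.univ.filter fun i : Fin (2 * n) => (i : ℕ) < k ∧ step i = true).card := by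
    intro k hk
    have h1 := key k hk
    have h2 := hh.nonneg ((k : ℤ) - n)
    simp only [wordHt, sub_add_cancel, Nat.cast_lt] at h1
    omega
  refine ⟨⟨step, hb, hn⟩, fun x => ?_⟩
  rcases le_total (n : ℤ) x with hx | hx
  · rw [DyckPath.ht_of_ge _ hx, hh.right _ hx]
  rcases le_total x (-n) with hx' | hx'
  · rw [hh.left _ hx']
    exact wordHt_of_le step hx'
  have := key (x + n).toNat (by omega)
  rw [Int.toNat_of_nonneg (by omega), add_sub_cancel_right] at this
  exact this

namespace IsDyckHt

variable {n : ℕ} {h : ℤ → ℤ}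

lemma parity (hh : IsDyckHt n h) {x : ℤ} (h1 : -n ≤ x) (h2 : x ≤ n) :
    (h x - x - n) % 2 = 0 := by
  induction x, h1 using Int.leInduction with
  | base => rw [hh.left _ le_rfl]; omega
  | succ x hx ih =>
    have := ih (by omega)
    rcases hh.step x hx (by omega) with h | h <;> omega

lemma le_order (hh : IsDyckHt n h) (x : ℤ) : h x ≤ n := by
  have hl : ∀ k : ℕ, h (-n + k) ≤ k := by
    intro k
    induction k with
    | zero => rw [hh.left _ (by simp)]; simp
    | succ k ih =>
      rcases le_or_gt (n : ℤ) (-n + ((k + 1 : ℕ) : ℤ)) with hk | hk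
      · rw [hh.right _ hk]; omega
      · push_cast at hk ⊢
        have := hh.step (-n + k) (by omega) (by omega)
        rw [add_assoc] at this
        omega
  have hr : ∀ k : ℕ, h (n - k) ≤ k := by
    intro k
    induction k with
    | zero => rw [hh.right _ (by simp)]; simp
    | succ k ih =>
      rcases le_or_gt ((n : ℤ) - ((k + 1 : ℕ) : ℤ)) (-n - 1) with hk | hk
      · rw [hh.left _ (by omega)]; omega
      · push_cast at hk ⊢
        have := hh.step (n - (k + 1)) (by omega) (by omega)
        rw [show (n : ℤ) - (k + 1) + 1 = n - k by ring] at this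
        omega
  rcases le_total x (-n) with hx | hx
  · rw [hh.left _ hx]; omega
  rcases le_total (n : ℤ) x with hx' | hx'
  · rw [hh.right _ hx']; omega
  rcases le_total x 0 with h0 | h0
  · have := hl (x + n).toNat
    rw [Int.toNat_of_nonneg (by omega), show -(n : ℤ) + (x + n) = x by ring] at this
    omega
  · have := hr (n - x).toNat
    rw [Int.toNat_of_nonneg (by omega), sub_sub_cancel] at this
    omega

lemma mem_Ioo_of_pos (hh : IsDyckHt n h) {x : ℤ} (hx : 0 < h x) : -(n : ℤ) < x ∧ x < n := by
  constructor
  · by_contra hc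
    rw [hh.left _ (by omega)] at hx
    omega
  · by_contra hc
    rw [hh.right _ (by omega)] at hx
    omega

end IsDyckHt

lemma mem_skewCells {n : ℕ} {lam mu : DyckPath n} {x z : ℤ} :
    (x, z) ∈ skewCells lam mu ↔
      lam.ht x ≤ z ∧ z + 2 ≤ mu.ht x ∧ (z - x - n) % 2 = 0 := by
  simp only [skewCells, Finset.mem_filter, Finset.mem_product, Finset.mem_Icc, and_iff_right_iff_imp]
  rintro ⟨h1, h2, -⟩
  have h3 := lam.isDyckHt.nonneg x
  have h4 := mu.isDyckHt.le_order x
  have h5 := mu.isDyckHt.mem_Ioo_of_pos (x := x) (by omega)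
  omega

namespace DyckTiling

variable {n : ℕ}

lemma ext_of_ht {T R : DyckTiling n} (hl : ∀ x, T.lower.ht x = R.lower.ht x)
    (hu : ∀ x, T.upper.ht x = R.upper.ht x) (ht : T.tiles = R.tiles) : T = R := by
  have h1 := DyckPath.ext_of_ht hl
  have h2 := DyckPath.ext_of_ht hu
  cases T; cases R
  simp only at h1 h2 ht
  subst h1 h2 ht
  rfl

lemma exists_tile_iff (T : DyckTiling n) {x z : ℤ} :
    (∃ t ∈ T.tiles, (x, z) ∈ t) ↔
      T.lower.ht x ≤ z ∧ z + 2 ≤ T.upper.ht x ∧ (z - x - n) % 2 = 0 := by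
  rw [← mem_skewCells, ← T.cover]
  simp

lemma bounds_of_mem (T : DyckTiling n) {t : Finset (ℤ × ℤ)} (ht : t ∈ T.tiles) {x z : ℤ}
    (h : (x, z) ∈ t) :
    T.lower.ht x ≤ z ∧ z + 2 ≤ T.upper.ht x ∧ (z - x - n) % 2 = 0 :=
  T.exists_tile_iff.1 ⟨t, ht, h⟩

lemma eq_of_mem (T : DyckTiling n) {t u : Finset (ℤ × ℤ)} (ht : t ∈ T.tiles)
    (hu : u ∈ T.tiles) {c : ℤ × ℤ} (hct : c ∈ t) (hcu : c ∈ u) : t = u := by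
  by_contra hne
  exact Finset.disjoint_left.1 (T.disj t ht u hu hne) hct hcu

end DyckTiling

lemma isDyckTile_singleton (c : ℤ × ℤ) : IsDyckTile {c} :=
  ⟨c.1, c.1, fun _ => c.2, le_rfl, fun x h1 h2 => by omega, rfl, fun _ _ _ => le_rfl, by simp⟩

lemma IsDyckTile.nonempty {t : Finset (ℤ × ℤ)} (h : IsDyckTile t) : t.Nonempty := by
  obtain ⟨a, b, f, hab, -, -, -, rfl⟩ := h
  exact ⟨(a, f a), Finset.mem_image.2 ⟨a, Finset.mem_Icc.2 ⟨le_rfl, hab⟩, rfl⟩⟩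

section Layer

variable {n : ℕ}

/-- `T'` arises from `T` by putting a one-box tile on top of each column in `A`. -/
structure IsLayer (T : DyckTiling n) (A : Finset ℤ) (T' : DyckTiling n) : Prop where
  lower : ∀ x, T'.lower.ht x = T.lower.ht x
  upper : ∀ x, T'.upper.ht x = if x ∈ A then T.upper.ht x + 2 else T.upper.ht x
  tiles : T'.tiles = T.tiles ∪ A.image fun x => ({(x, T.upper.ht x)} : Finset (ℤ × ℤ))

lemma parity_of_raised {h h' : ℤ → ℤ} (hh : IsDyckHt n h) (hh' : IsDyckHt n h') {x : ℤ}
    (hx : h' x = h x + 2) : (h x - x - n) % 2 = 0 := by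
  have h1 := hh.nonneg x
  have h2 := hh'.mem_Ioo_of_pos (x := x) (by omega)
  exact hh.parity (by omega) (by omega)

lemma exists_layer (T : DyckTiling n) (A : Finset ℤ)
    (hA : IsDyckHt n fun x => if x ∈ A then T.upper.ht x + 2 else T.upper.ht x) :
    ∃ T', IsLayer T A T' := by
  obtain ⟨M, hM⟩ := hA.exists_path
  have hpar : ∀ x ∈ A, (T.upper.ht x - x - n) % 2 = 0 := fun x hx =>
    parity_of_raised T.upper.isDyckHt hA (by simp [hx])
  refine ⟨⟨T.lower, M, fun x => ?_,
    T.tiles ∪ A.image fun x => ({(x, T.upper.ht x)} : Finset (ℤ × ℤ)), ?_, ?_, ?_⟩,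
    fun _ => rfl, hM, rfl⟩
  · have := T.below x
    rw [hM]
    split_ifs <;> omega
  · intro t ht
    rcases Finset.mem_union.1 ht with ht | ht
    · exact T.isDyck t ht
    · obtain ⟨x, -, rfl⟩ := Finset.mem_image.1 ht
      exact isDyckTile_singleton _
  · have new : ∀ t ∈ T.tiles, ∀ x, Disjoint t {(x, T.upper.ht x)} := by
      intro t ht x
      rw [Finset.disjoint_singleton_right]
      intro h
      have := T.bounds_of_mem ht h
      omega
    intro t ht u hu hne
    rcases Finset.mem_union.1 ht with ht | ht <;> rcases Finset.mem_union.1 hu with hu | hu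
    · exact T.disj t ht u hu hne
    · obtain ⟨x, -, rfl⟩ := Finset.mem_image.1 hu
      exact new t ht x
    · obtain ⟨x, -, rfl⟩ := Finset.mem_image.1 ht
      exact (new u hu x).symm
    · obtain ⟨x, -, rfl⟩ := Finset.mem_image.1 ht
      obtain ⟨y, -, rfl⟩ := Finset.mem_image.1 hu
      rw [Finset.disjoint_singleton]
      intro h
      exact hne (by rw [h])
  · ext ⟨x, z⟩
    rw [Finset.union_biUnion, Finset.mem_union, T.cover, mem_skewCells, mem_skewCells, hM]
    simp only [Finset.mem_biUnion, Finset.mem_image, id_eq, exists_exists_and_eq_and,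
      Finset.mem_singleton, Prod.mk.injEq]
    have hb := T.below x
    constructor
    · rintro (⟨h1, h2, h3⟩ | ⟨y, hy, rfl, rfl⟩)
      · split_ifs <;> omega
      · rw [if_pos hy]
        exact ⟨hb, le_rfl, hpar x hy⟩
    · rintro ⟨h1, h2, h3⟩
      by_cases hx : x ∈ A
      · rw [if_pos hx] at h2
        have := hpar x hx
        rcases eq_or_ne z (T.upper.ht x) with rfl | hz
        · exact Or.inr ⟨x, hx, rfl, rfl⟩
        · exact Or.inl ⟨h1, by omega, h3⟩
      · rw [if_neg hx] at h2
        exact Or.inl ⟨h1, h2, h3⟩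

lemma exists_layer_removed (T' : DyckTiling n) (A : Finset ℤ) {h : ℤ → ℤ} (hh : IsDyckHt n h)
    (hT : ∀ x, T'.upper.ht x = if x ∈ A then h x + 2 else h x)
    (hA : ∀ x ∈ A, ({(x, h x)} : Finset (ℤ × ℤ)) ∈ T'.tiles) :
    ∃ T, IsLayer T A T' ∧ ∀ x, T.upper.ht x = h x := by
  obtain ⟨U, hU⟩ := hh.exists_path
  set B := A.image fun x => ({(x, h x)} : Finset (ℤ × ℤ)) with hB
  have hBsub : B ⊆ T'.tiles := by
    intro t ht
    obtain ⟨x, hx, rfl⟩ := Finset.mem_image.1 ht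
    exact hA x hx
  refine ⟨⟨T'.lower, U, fun x => ?_, T'.tiles \ B, ?_, ?_, ?_⟩, ⟨fun _ => rfl, ?_, ?_⟩, hU⟩
  · rw [hU]
    by_cases hx : x ∈ A
    · exact (T'.bounds_of_mem (hA x hx) (Finset.mem_singleton_self _)).1
    · have := T'.below x
      rwa [hT, if_neg hx] at this
  · exact fun t ht => T'.isDyck t (Finset.mem_sdiff.1 ht).1
  · exact fun t ht u hu => T'.disj t (Finset.mem_sdiff.1 ht).1 u (Finset.mem_sdiff.1 hu).1
  · ext ⟨x, z⟩
    rw [mem_skewCells, hU]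
    simp only [Finset.mem_biUnion, id_eq, Finset.mem_sdiff]
    constructor
    · rintro ⟨t, ⟨ht, htB⟩, hc⟩
      have hb := T'.bounds_of_mem ht hc
      refine ⟨hb.1, ?_, hb.2.2⟩
      have h2 := hb.2.1
      rw [hT] at h2
      by_cases hx : x ∈ A
      · rw [if_pos hx] at h2
        have hz : z ≠ h x := by
          rintro rfl
          have := T'.eq_of_mem ht (hA x hx) hc (Finset.mem_singleton_self _)
          exact htB (this ▸ Finset.mem_image.2 ⟨x, hx, rfl⟩)
        have := T'.bounds_of_mem (hA x hx) (Finset.mem_singleton_self _)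
        omega
      · rwa [if_neg hx] at h2
    · rintro ⟨h1, h2, h3⟩
      obtain ⟨t, ht, hc⟩ := T'.exists_tile_iff.2
        ⟨h1, by rw [hT]; split_ifs <;> omega, h3⟩
      refine ⟨t, ⟨ht, fun htB => ?_⟩, hc⟩
      obtain ⟨y, hy, rfl⟩ := Finset.mem_image.1 htB
      rw [Finset.mem_singleton, Prod.mk.injEq] at hc
      obtain ⟨rfl, rfl⟩ := hc
      omega
  · intro x
    simp only [hU, hT]
  · simp only [hU]
    exact (Finset.sdiff_union_of_subset hBsub).symm

namespace IsLayer

variable {T R T' : DyckTiling n} {A : Finset ℤ}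

lemma new_not_mem (T : DyckTiling n) (x : ℤ) :
    ({(x, T.upper.ht x)} : Finset (ℤ × ℤ)) ∉ T.tiles := by
  intro ht
  have := T.bounds_of_mem ht (Finset.mem_singleton_self _)
  omega

lemma injective (h : IsLayer T A T') (h' : IsLayer R A T') : T = R := by
  have hu : ∀ x, T.upper.ht x = R.upper.ht x := by
    intro x
    have h1 := h.upper x
    have h2 := h'.upper x
    split_ifs at h1 h2 <;> omega
  refine DyckTiling.ext_of_ht (fun x => by rw [← h.lower, h'.lower]) hu ?_
  have e := h.tiles.symm.trans h'.tiles
  simp only [hu] at e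
  have disj : ∀ S : DyckTiling n, (∀ x, S.upper.ht x = R.upper.ht x) →
      Disjoint S.tiles (A.image fun x => ({(x, R.upper.ht x)} : Finset (ℤ × ℤ))) := by
    intro S hS
    rw [Finset.disjoint_right]
    intro t ht
    obtain ⟨x, -, rfl⟩ := Finset.mem_image.1 ht
    rw [← hS]
    exact new_not_mem S x
  rw [← Finset.union_sdiff_cancel_right (disj T hu), e,
    Finset.union_sdiff_cancel_right (disj R fun _ => rfl)]

lemma coverInclusive (h : IsLayer T A T') (hT : T.CoverInclusive) : T'.CoverInclusive := by
  intro t ht u hu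
  rw [h.tiles] at ht hu
  rintro ⟨⟨x, z⟩, hp, ⟨x', y⟩, hq, hxx, hlt⟩
  simp only at hxx hlt
  subst hxx
  rcases Finset.mem_union.1 ht with ht | ht
  · rcases Finset.mem_union.1 hu with hu | hu
    · exact hT t ht u hu ⟨_, hp, _, hq, rfl, hlt⟩
    · obtain ⟨w, -, rfl⟩ := Finset.mem_image.1 hu
      rw [Finset.mem_singleton, Prod.mk.injEq] at hq
      obtain ⟨rfl, rfl⟩ := hq
      have := T.bounds_of_mem ht hp
      omega
  · obtain ⟨w, -, rfl⟩ := Finset.mem_image.1 ht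
    rw [Finset.mem_singleton] at hp
    intro p hp'
    rw [Finset.mem_singleton] at hp'
    rw [hp', ← hp]
    exact ⟨y, hq⟩

lemma coverInclusive_of (h : IsLayer T A T') (hT : T'.CoverInclusive) : T.CoverInclusive := by
  intro t ht u hu
  refine hT t ?_ u ?_ <;> rw [h.tiles] <;> exact Finset.mem_union_left _ ‹_›

lemma top_mem (h : IsLayer T A T') {x : ℤ} (hx : x ∈ A) :
    ({(x, T'.upper.ht x - 2)} : Finset (ℤ × ℤ)) ∈ T'.tiles := by
  rw [h.tiles, h.upper, if_pos hx, add_sub_cancel_right]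
  exact Finset.mem_union_right _ (Finset.mem_image.2 ⟨x, hx, rfl⟩)

lemma mem_tiles_iff_of_not_mem (h : IsLayer T A T') {x z : ℤ} (hx : x ∉ A) :
    ({(x, z)} : Finset (ℤ × ℤ)) ∈ T'.tiles ↔ ({(x, z)} : Finset (ℤ × ℤ)) ∈ T.tiles := by
  rw [h.tiles, Finset.mem_union, or_iff_left]
  intro hc
  obtain ⟨w, hw, he⟩ := Finset.mem_image.1 hc
  rw [Finset.singleton_inj, Prod.mk.injEq] at he
  exact hx (he.1 ▸ hw)

end IsLayer

end Layer

/-- The column of the original path above which a column of the spread path lies. -/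
def pullCol (s x : ℤ) : ℤ := if x < s then x + 1 else if x = s then s else x - 1

/-- The point of the original picture from which a point of the spread picture arises. -/
def pullPt (s : ℤ) (c : ℤ × ℤ) : ℤ × ℤ := (pullCol s c.1, if c.1 = s then c.2 - 1 else c.2)

/-- A section of `pullPt`. -/
def pushPt (s : ℤ) (c : ℤ × ℤ) : ℤ × ℤ := (if c.1 ≤ s then c.1 - 1 else c.1 + 1, c.2)

lemma pullPt_pushPt (s : ℤ) (c : ℤ × ℤ) : pullPt s (pushPt s c) = c := by
  obtain ⟨x, y⟩ := c
  simp only [pullPt, pushPt, pullCol, Prod.mk.injEq]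
  split_ifs <;> omega

lemma mem_spreadTile {s : ℤ} {t : Finset (ℤ × ℤ)} {c : ℤ × ℤ} :
    c ∈ spreadTile s t ↔ pullPt s c ∈ t := by
  obtain ⟨x, y⟩ := c
  simp only [spreadTile, Finset.mem_union, Finset.mem_image, Finset.mem_filter, Prod.exists,
    Prod.mk.injEq, pullPt, pullCol]
  rcases lt_trichotomy x s with h | rfl | h
  · rw [if_pos h, if_neg h.ne]
    constructor
    · rintro ((⟨a, b, ⟨h1, h2⟩, h3, rfl⟩ | ⟨a, b, ⟨h1, h2⟩, h3, h4⟩) | ⟨a, b, ⟨h1, h2⟩, h3, h4⟩)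
      · rwa [show x + 1 = a by omega]
      · omega
      · omega
    · intro h1
      exact Or.inl (Or.inl ⟨x + 1, y, ⟨h1, by omega⟩, by omega, rfl⟩)
  · rw [if_neg (lt_irrefl x), if_pos rfl, if_pos rfl]
    constructor
    · rintro ((⟨a, b, ⟨h1, h2⟩, h3, rfl⟩ | ⟨a, b, ⟨h1, rfl⟩, h3, rfl⟩) | ⟨a, b, ⟨h1, h2⟩, h3, h4⟩)
      · omega
      · rwa [add_sub_cancel_right]
      · omega
    · intro h1
      exact Or.inl (Or.inr ⟨x, y - 1, ⟨h1, rfl⟩, rfl, by omega⟩)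
  · rw [if_neg (by omega), if_neg (by omega), if_neg (by omega)]
    constructor
    · rintro ((⟨a, b, ⟨h1, h2⟩, h3, rfl⟩ | ⟨a, b, ⟨h1, h2⟩, h3, h4⟩) | ⟨a, b, ⟨h1, h2⟩, h3, rfl⟩)
      · omega
      · omega
      · rwa [show x - 1 = a by omega]
    · intro h1
      exact Or.inr ⟨x - 1, y, ⟨h1, by omega⟩, by omega, rfl⟩

lemma pushPt_mem_spreadTile {s : ℤ} {t : Finset (ℤ × ℤ)} {c : ℤ × ℤ} :
    pushPt s c ∈ spreadTile s t ↔ c ∈ t := by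
  rw [mem_spreadTile, pullPt_pushPt]

lemma spreadTile_injective (s : ℤ) : Function.Injective (spreadTile s) := by
  intro t u h
  ext c
  rw [← pushPt_mem_spreadTile (s := s), h, pushPt_mem_spreadTile]

lemma spreadHt_eq {n : ℕ} (P : DyckPath n) (s x : ℤ) :
    spreadHt P s x = P.ht (pullCol s x) + if x = s then 1 else 0 := by
  unfold spreadHt pullCol
  split_ifs <;> simp_all

lemma isDyckHt_spreadHt {n : ℕ} (P : DyckPath n) {s : ℤ} (h1 : -(n : ℤ) ≤ s) (h2 : s ≤ n) :
    IsDyckHt (n + 1) (spreadHt P s) where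
  left x hx := by
    push_cast at hx
    rw [spreadHt, if_pos (by omega)]
    exact P.isDyckHt.left _ (by omega)
  right x hx := by
    push_cast at hx
    rw [spreadHt, if_neg (by omega), if_neg (by omega)]
    exact P.isDyckHt.right _ (by omega)
  nonneg x := by
    have := P.isDyckHt.nonneg (pullCol s x)
    rw [spreadHt_eq]
    split_ifs <;> omega
  step x hx1 hx2 := by
    push_cast at hx1 hx2
    unfold spreadHt
    rcases lt_trichotomy (x + 1) s with h | h | h
    · rw [if_pos h, if_pos (by omega)]
      exact P.isDyckHt.step _ (by omega) (by omega)
    · rw [if_neg (by omega), if_pos h, if_pos (by omega), h]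
      exact Or.inl rfl
    · rw [if_neg (by omega), if_neg (by omega), if_neg (by omega), add_sub_cancel_right]
      split_ifs with h3
      · subst h3; right; ring
      · have := P.isDyckHt.step (x - 1) (by omega) (by omega)
        rwa [sub_add_cancel] at this

lemma IsDyckTile.spread {t : Finset (ℤ × ℤ)} (ht : IsDyckTile t) (s : ℤ) :
    IsDyckTile (spreadTile s t) := by
  obtain ⟨a, b, f, hab, hstep, hfab, hmin, rfl⟩ := ht
  refine ⟨if a ≤ s then a - 1 else a + 1, if s ≤ b then b + 1 else b - 1,
    fun x => f (pullCol s x) + if x = s then 1 else 0, ?_, ?_, ?_, ?_, ?_⟩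
  · split_ifs <;> omega
  · intro x h1 h2
    simp only [pullCol]
    rcases lt_trichotomy (x + 1) s with h | h | h
    · rw [if_pos h, if_pos (show x < s by omega), if_neg (show ¬ x + 1 = s by omega),
        if_neg (show ¬ x = s by omega)]
      have := hstep (x + 1) (by split_ifs at h1 <;> omega) (by split_ifs at h2 <;> omega)
      omega
    · rw [if_neg (show ¬ x + 1 < s by omega), if_pos h, if_pos (show x < s by omega), if_pos h,
        if_neg (show ¬ x = s by omega), h]
      omega
    · rw [if_neg (show ¬ x + 1 < s by omega), if_neg (show ¬ x + 1 = s by omega),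
        if_neg (show ¬ x < s by omega), if_neg (show ¬ x + 1 = s by omega), add_sub_cancel_right]
      split_ifs with h3
      · subst h3; omega
      · have := hstep (x - 1) (by split_ifs at h1 <;> omega) (by split_ifs at h2 <;> omega)
        rw [sub_add_cancel] at this
        omega
  · have ha : pullCol s (if a ≤ s then a - 1 else a + 1) = a := by
      unfold pullCol; split_ifs <;> omega
    have hb : pullCol s (if s ≤ b then b + 1 else b - 1) = b := by
      unfold pullCol; split_ifs <;> omega
    simp only [ha, hb]
    rw [if_neg (by split_ifs <;> omega), if_neg (by split_ifs <;> omega), hfab]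
  · have ha : pullCol s (if a ≤ s then a - 1 else a + 1) = a := by
      unfold pullCol; split_ifs <;> omega
    intro x h1 h2
    simp only [ha]
    have h3 := hmin (pullCol s x)
      (by unfold pullCol; split_ifs at h1 h2 ⊢ <;> omega)
      (by unfold pullCol; split_ifs at h1 h2 ⊢ <;> omega)
    rw [if_neg (by split_ifs <;> omega)]
    split_ifs <;> omega
  · ext ⟨x, y⟩
    rw [mem_spreadTile]
    simp only [pullPt, Finset.mem_image, Finset.mem_Icc, Prod.mk.injEq]
    constructor
    · rintro ⟨w, ⟨h1, h2⟩, rfl, h3⟩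
      refine ⟨x, ?_, rfl, ?_⟩
      · unfold pullCol at h1 h2; split_ifs at h1 h2 ⊢ <;> omega
      · rw [h3]; split_ifs <;> omega
    · rintro ⟨w, ⟨h1, h2⟩, rfl, h3⟩
      refine ⟨_, ?_, rfl, ?_⟩
      · unfold pullCol; split_ifs at h1 h2 ⊢ <;> omega
      · split_ifs at h3 ⊢ <;> omega

section Spread

variable {n : ℕ}

/-- `T'` is the spread of `T` at column `s`. -/
structure IsSpread (T : DyckTiling n) (s : ℤ) (T' : DyckTiling (n + 1)) : Prop where
  lower : ∀ x, T'.lower.ht x = spreadHt T.lower s x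
  upper : ∀ x, T'.upper.ht x = spreadHt T.upper s x
  tiles : T'.tiles = spreadTiles s T.tiles

/-- The upper path of `T` has a peak at column `s` that is not the top of a one-box tile. -/
structure HasBigPeak (T : DyckTiling n) (s : ℤ) : Prop where
  up : T.upper.ht s = T.upper.ht (s - 1) + 1
  down : T.upper.ht (s + 1) = T.upper.ht s - 1
  top : ({(s, T.upper.ht s - 2)} : Finset (ℤ × ℤ)) ∉ T.tiles

lemma exists_spread (T : DyckTiling n) {s : ℤ} (h1 : -(n : ℤ) ≤ s) (h2 : s ≤ n) :
    ∃ T', IsSpread T s T' := by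
  obtain ⟨L, hL⟩ := (isDyckHt_spreadHt T.lower h1 h2).exists_path
  obtain ⟨U, hU⟩ := (isDyckHt_spreadHt T.upper h1 h2).exists_path
  refine ⟨⟨L, U, fun x => ?_, spreadTiles s T.tiles, ?_, ?_, ?_⟩, hL, hU, rfl⟩
  · have := T.below (pullCol s x)
    rw [hL, hU, spreadHt_eq, spreadHt_eq]
    omega
  · intro t ht
    obtain ⟨u, hu, rfl⟩ := Finset.mem_image.1 ht
    exact (T.isDyck u hu).spread s
  · intro t ht u hu hne
    obtain ⟨t, ht', rfl⟩ := Finset.mem_image.1 ht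
    obtain ⟨u, hu', rfl⟩ := Finset.mem_image.1 hu
    rw [Finset.disjoint_left]
    intro c hc hc'
    rw [mem_spreadTile] at hc hc'
    exact hne (by rw [T.eq_of_mem ht' hu' hc hc'])
  · ext ⟨x, z⟩
    rw [mem_skewCells, hL, hU, spreadHt_eq, spreadHt_eq]
    simp only [spreadTiles, Finset.mem_biUnion, Finset.mem_image, id_eq,
      exists_exists_and_eq_and, mem_spreadTile]
    unfold pullPt
    rw [T.exists_tile_iff]
    unfold pullCol
    push_cast
    split_ifs <;> omega

namespace IsSpread

variable {T R : DyckTiling n} {T' R' : DyckTiling (n + 1)} {s : ℤ}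

lemma injective (h : IsSpread T s T') (h' : IsSpread R s T') : T = R := by
  have key : ∀ P S : DyckPath n, (∀ x, spreadHt P s x = spreadHt S s x) →
      ∀ x, P.ht x = S.ht x := by
    intro P S hPS x
    have := hPS (pushPt s (x, 0)).1
    have e := congrArg Prod.fst (pullPt_pushPt s (x, 0))
    simp only [pullPt] at e
    rw [spreadHt_eq, spreadHt_eq, e] at this
    omega
  refine DyckTiling.ext_of_ht (key _ _ fun x => ?_) (key _ _ fun x => ?_) ?_
  · rw [← h.lower, h'.lower]
  · rw [← h.upper, h'.upper]
  · exact Finset.image_injective (spreadTile_injective s) (h.tiles.symm.trans h'.tiles)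

lemma mem_tiles_iff (h : IsSpread T s T') {t : Finset (ℤ × ℤ)} :
    spreadTile s t ∈ T'.tiles ↔ t ∈ T.tiles := by
  rw [h.tiles, spreadTiles, (spreadTile_injective s).mem_finset_image]

lemma coverInclusive (h : IsSpread T s T') (hT : T.CoverInclusive) : T'.CoverInclusive := by
  intro t ht u hu
  rw [h.tiles] at ht hu
  obtain ⟨t, ht', rfl⟩ := Finset.mem_image.1 ht
  obtain ⟨u, hu', rfl⟩ := Finset.mem_image.1 hu
  rintro ⟨p, hp, q, hq, hpq, hlt⟩ c hc
  rw [mem_spreadTile] at hp hq hc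
  obtain ⟨y, hy⟩ := hT t ht' u hu'
    ⟨_, hp, _, hq, by simp [pullPt, hpq], by simp only [pullPt, hpq]; split_ifs <;> omega⟩ _ hc
  refine ⟨if c.1 = s then y + 1 else y, ?_⟩
  rw [mem_spreadTile]
  simp only [pullPt] at hy ⊢
  convert hy using 2
  split_ifs <;> omega

lemma coverInclusive_of (h : IsSpread T s T') (hT : T'.CoverInclusive) : T.CoverInclusive := by
  rintro t ht u hu ⟨p, hp, q, hq, hpq, hlt⟩ c hc
  obtain ⟨y, hy⟩ := hT _ (h.mem_tiles_iff.2 ht) _ (h.mem_tiles_iff.2 hu)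
    ⟨_, pushPt_mem_spreadTile.2 hp, _, pushPt_mem_spreadTile.2 hq, by simp [pushPt, hpq],
      by simpa [pushPt] using hlt⟩ _ (pushPt_mem_spreadTile.2 hc)
  rw [mem_spreadTile] at hy
  have e := congrArg Prod.fst (pullPt_pushPt s c)
  simp only [pullPt] at e hy
  rw [e] at hy
  exact ⟨_, hy⟩

lemma hasBigPeak (h : IsSpread T s T') : HasBigPeak T' s where
  up := by rw [h.upper, h.upper]; simp [spreadHt]
  down := by rw [h.upper, h.upper]; simp [spreadHt]
  top := by
    rw [h.tiles]
    intro hc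
    obtain ⟨t, -, ht⟩ := Finset.mem_image.1 hc
    have h1 : (s, T'.upper.ht s - 2) ∈ spreadTile s t := by rw [ht]; simp
    rw [mem_spreadTile] at h1
    have h2 : (s - 1, T'.upper.ht s - 3) ∈ spreadTile s t := by
      rw [mem_spreadTile]
      convert h1 using 1
      simp only [pullPt, pullCol, Prod.mk.injEq]
      split_ifs <;> omega
    rw [ht, Finset.mem_singleton, Prod.mk.injEq] at h2
    omega

lemma mem_range (h : IsSpread T s T') : -(n : ℤ) ≤ s ∧ s ≤ n := by
  have h1 := h.hasBigPeak.up
  have h2 := T'.upper.isDyckHt.nonneg (s - 1)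
  have := T'.upper.isDyckHt.mem_Ioo_of_pos (x := s) (by omega)
  push_cast at this
  omega

end IsSpread

end Spread

section Unspread

variable {n : ℕ}

/-- Heights of the path obtained by deleting the peak at column `s`. -/
def unspreadHt (s : ℤ) (h : ℤ → ℤ) (x : ℤ) : ℤ := h (if x ≤ s then x - 1 else x + 1)

lemma IsDyckHt.unspread {h : ℤ → ℤ} (hh : IsDyckHt (n + 1) h) {s : ℤ}
    (hs1 : -(n : ℤ) ≤ s) (hs2 : s ≤ n) (hpeak : h (s - 1) = h (s + 1)) :
    IsDyckHt n (unspreadHt s h) where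
  left x hx := hh.left _ (by push_cast; split_ifs <;> omega)
  right x hx := by
    unfold unspreadHt
    split_ifs with h1
    · obtain rfl : x = s := by omega
      rw [hpeak]
      exact hh.right _ (by push_cast; omega)
    · exact hh.right _ (by push_cast; omega)
  nonneg x := hh.nonneg _
  step x hx1 hx2 := by
    unfold unspreadHt
    rcases lt_trichotomy x s with h1 | rfl | h1
    · rw [if_pos (by omega), if_pos (by omega), add_sub_cancel_right]
      have := hh.step (x - 1) (by push_cast; omega) (by push_cast; omega)
      rwa [sub_add_cancel] at this
    · rw [if_neg (by omega), if_pos le_rfl, hpeak]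
      exact hh.step _ (by push_cast; omega) (by push_cast; omega)
    · rw [if_neg (by omega), if_neg (by omega)]
      exact hh.step _ (by push_cast; omega) (by push_cast; omega)

lemma spreadHt_of_unspreadHt {P : DyckPath n} {s : ℤ} {h : ℤ → ℤ}
    (hP : ∀ x, P.ht x = unspreadHt s h x) (h1 : h s = h (s - 1) + 1)
    (h2 : h (s + 1) = h s - 1) (x : ℤ) : spreadHt P s x = h x := by
  simp only [spreadHt, hP, unspreadHt]
  rcases lt_trichotomy x s with hx | rfl | hx
  · rw [if_pos hx, if_pos (by omega), add_sub_cancel_right]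
  · rw [if_neg (by omega), if_pos rfl, if_pos le_rfl, h1]
  · rw [if_neg (by omega), if_neg (by omega)]
    split_ifs with h3
    · obtain rfl : x = s + 1 := by omega
      rw [add_sub_cancel_right]
      omega
    · rw [sub_add_cancel]

lemma IsDyckTile.of_spreadTile {t : Finset (ℤ × ℤ)} {s : ℤ} (ht : IsDyckTile (spreadTile s t)) :
    IsDyckTile t := by
  obtain ⟨a, b, f, hab, hstep, hfab, hmin, heq⟩ := ht
  have hmem : ∀ x y, (pullPt s (x, y)) ∈ t ↔ (a ≤ x ∧ x ≤ b) ∧ f x = y := by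
    intro x y
    rw [← mem_spreadTile, heq]
    simp only [Finset.mem_image, Finset.mem_Icc, Prod.mk.injEq]
    constructor
    · rintro ⟨w, h1, rfl, h2⟩
      exact ⟨h1, h2⟩
    · rintro ⟨h1, h2⟩
      exact ⟨x, h1, rfl, h2⟩
  have e1 : ∀ y, pullPt s (s - 1, y) = (s, y) := by
    intro y; simp only [pullPt, pullCol, Prod.mk.injEq]; split_ifs <;> omega
  have e2 : ∀ y, pullPt s (s, y) = (s, y - 1) := by
    intro y; simp only [pullPt, pullCol, Prod.mk.injEq]; split_ifs <;> omega
  have e3 : ∀ y, pullPt s (s + 1, y) = (s, y) := by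
    intro y; simp only [pullPt, pullCol, Prod.mk.injEq]; split_ifs <;> omega
  have c1 : ∀ y, (a ≤ s - 1 ∧ s - 1 ≤ b) ∧ f (s - 1) = y ↔ (s, y) ∈ t := by
    intro y; rw [← hmem, e1]
  have c2 : ∀ y, (a ≤ s ∧ s ≤ b) ∧ f s = y ↔ (s, y - 1) ∈ t := by
    intro y; rw [← hmem, e2]
  have c3 : ∀ y, (a ≤ s + 1 ∧ s + 1 ≤ b) ∧ f (s + 1) = y ↔ (s, y) ∈ t := by
    intro y; rw [← hmem, e3]
  have c12 := (c2 (f s)).trans (c1 (f s - 1)).symm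
  have c13 := (c1 (f (s - 1))).trans (c3 (f (s - 1))).symm
  have c31 := (c3 (f (s + 1))).trans (c1 (f (s + 1))).symm
  have hends : (b ≤ s - 2) ∨ (s + 2 ≤ a) ∨ (a ≤ s - 1 ∧ s + 1 ≤ b ∧ f (s - 1) = f (s + 1)) := by
    omega
  have hpush : ∀ x y, (x, y) ∈ t ↔
      (a ≤ (if x ≤ s then x - 1 else x + 1) ∧ (if x ≤ s then x - 1 else x + 1) ≤ b) ∧
        f (if x ≤ s then x - 1 else x + 1) = y := by
    intro x y
    have := hmem (pushPt s (x, y)).1 y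
    rwa [show ((pushPt s (x, y)).1, y) = pushPt s (x, y) from rfl, pullPt_pushPt] at this
  refine ⟨if a < s then a + 1 else a - 1, if b < s then b + 1 else b - 1,
    fun x => f (if x ≤ s then x - 1 else x + 1), ?_, ?_, ?_, ?_, ?_⟩
  · split_ifs <;> omega
  · intro x h1 h2
    simp only
    rcases lt_trichotomy x s with h3 | rfl | h3
    · rw [if_pos (show x + 1 ≤ s by omega), if_pos h3.le, add_sub_cancel_right]
      have := hstep (x - 1) (by split_ifs at h1 h2 <;> omega) (by split_ifs at h1 h2 <;> omega)
      rwa [sub_add_cancel] at this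
    · rw [if_neg (show ¬ x + 1 ≤ x by omega), if_pos le_rfl]
      rw [show f (x - 1) = f (x + 1) by split_ifs at h1 h2 <;> omega]
      exact hstep (x + 1) (by split_ifs at h1 h2 <;> omega) (by split_ifs at h1 h2 <;> omega)
    · rw [if_neg (show ¬ x + 1 ≤ s by omega), if_neg (show ¬ x ≤ s by omega)]
      exact hstep (x + 1) (by split_ifs at h1 h2 <;> omega) (by split_ifs at h1 h2 <;> omega)
  · have ha : (if (if a < s then a + 1 else a - 1) ≤ s then (if a < s then a + 1 else a - 1) - 1
        else (if a < s then a + 1 else a - 1) + 1) = a := by split_ifs <;> omega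
    rcases hends with h | h | ⟨h1, h2, h3⟩
    · simp only [ha]
      rw [if_pos (show b < s by omega), if_pos (show b + 1 ≤ s by omega), add_sub_cancel_right,
        hfab]
    · simp only [ha]
      rw [if_neg (show ¬ b < s by omega), if_neg (show ¬ b - 1 ≤ s by omega), sub_add_cancel, hfab]
    · simp only [ha]
      rw [if_neg (show ¬ b < s by omega)]
      split_ifs with h4
      · obtain rfl : b = s + 1 := by omega
        rw [add_sub_cancel_right, h3, hfab]
      · rw [sub_add_cancel, hfab]
  · have ha : (if (if a < s then a + 1 else a - 1) ≤ s then (if a < s then a + 1 else a - 1) - 1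
        else (if a < s then a + 1 else a - 1) + 1) = a := by split_ifs <;> omega
    intro x h1 h2
    simp only [ha]
    apply hmin <;> split_ifs at h1 h2 ⊢ <;> omega
  · ext ⟨x, y⟩
    rw [hpush]
    simp only [Finset.mem_image, Finset.mem_Icc, Prod.mk.injEq]
    constructor
    · rintro ⟨⟨h1, h2⟩, h3⟩
      refine ⟨x, ?_, rfl, h3⟩
      split_ifs at h1 h2 ⊢ <;> omega
    · rintro ⟨w, ⟨h1, h2⟩, rfl, h3⟩
      refine ⟨?_, h3⟩
      split_ifs at h1 h2 ⊢ <;> omega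

lemma IsDyckTile.peak_or_singleton {t : Finset (ℤ × ℤ)} (ht : IsDyckTile t) {x y : ℤ}
    (h : (x, y) ∈ t) (hl : (x - 1, y + 1) ∉ t) (hr : (x + 1, y + 1) ∉ t) :
    t = {(x, y)} ∨ (x - 1, y - 1) ∈ t ∧ (x + 1, y - 1) ∈ t := by
  obtain ⟨a, b, f, hab, hstep, hfab, hmin, rfl⟩ := ht
  have hmem : ∀ x y, (x, y) ∈ (Finset.Icc a b).image (fun x => (x, f x)) ↔
      (a ≤ x ∧ x ≤ b) ∧ f x = y := by
    intro x y
    simp only [Finset.mem_image, Finset.mem_Icc, Prod.mk.injEq]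
    constructor
    · rintro ⟨w, h1, rfl, h2⟩
      exact ⟨h1, h2⟩
    · rintro ⟨h1, h2⟩
      exact ⟨x, h1, rfl, h2⟩
  rw [hmem] at h hl hr
  obtain ⟨⟨h1, h2⟩, rfl⟩ := h
  rw [hmem, hmem]
  have hR := hstep x h1
  have hL := hstep (x - 1)
  rw [sub_add_cancel] at hL
  have hml := hmin (x - 1)
  have hmr := hmin (x + 1)
  rcases eq_or_lt_of_le h1 with rfl | h1
  · rcases eq_or_lt_of_le h2 with rfl | h2
    · left; simp
    · omega
  · rcases eq_or_lt_of_le h2 with rfl | h2 <;> omega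

lemma IsDyckTile.step_right {t : Finset (ℤ × ℤ)} (ht : IsDyckTile t) {x y w : ℤ}
    (h : (x, y) ∈ t) (h' : (x + 1, w) ∈ t) : w = y + 1 ∨ w = y - 1 := by
  obtain ⟨a, b, f, hab, hstep, hfab, hmin, rfl⟩ := ht
  simp only [Finset.mem_image, Finset.mem_Icc, Prod.mk.injEq] at h h'
  obtain ⟨v, h1, rfl, rfl⟩ := h
  obtain ⟨v', h2, rfl, rfl⟩ := h'
  exact hstep v h1.1 (by omega)

lemma IsDyckTile.height_unique {t : Finset (ℤ × ℤ)} (ht : IsDyckTile t) {x y w : ℤ}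
    (h : (x, y) ∈ t) (h' : (x, w) ∈ t) : y = w := by
  obtain ⟨a, b, f, hab, hstep, hfab, hmin, rfl⟩ := ht
  simp only [Finset.mem_image, Finset.mem_Icc, Prod.mk.injEq] at h h'
  obtain ⟨v, h1, rfl, rfl⟩ := h
  obtain ⟨v', h2, rfl, rfl⟩ := h'
  rfl

namespace HasBigPeak

variable {T : DyckTiling n} {s : ℤ}

lemma mem_Ioo (h : HasBigPeak T s) : -(n : ℤ) < s ∧ s < n := by
  have h1 := h.up
  have h2 := T.upper.isDyckHt.nonneg (s - 1)
  exact T.upper.isDyckHt.mem_Ioo_of_pos (by omega)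

/-- Every tile through the column of a big peak has a peak there. -/
lemma neighbors_mem (h : HasBigPeak T s) (hT : T.CoverInclusive) {t : Finset (ℤ × ℤ)}
    (ht : t ∈ T.tiles) {z : ℤ} (hz : (s, z) ∈ t) : (s - 1, z - 1) ∈ t ∧ (s + 1, z - 1) ∈ t := by
  have hup := h.up
  have hdown := h.down
  have key : ∀ k : ℕ, ∀ t ∈ T.tiles, ∀ z : ℤ, z = T.upper.ht s - 2 - 2 * k → (s, z) ∈ t →
      (s - 1, z - 1) ∈ t ∧ (s + 1, z - 1) ∈ t := by
    intro k
    induction k with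
    | zero =>
      intro t ht z hk hz
      have hl : (s - 1, z + 1) ∉ t := fun hc => by
        have := T.bounds_of_mem ht hc
        omega
      have hr : (s + 1, z + 1) ∉ t := fun hc => by
        have := T.bounds_of_mem ht hc
        omega
      refine ((T.isDyck t ht).peak_or_singleton hz hl hr).resolve_left fun h1 => h.top ?_
      rwa [h1, hk, Nat.cast_zero, mul_zero, sub_zero] at ht
    | succ k ih =>
      intro t ht z hk hz
      have hb := T.bounds_of_mem ht hz
      push_cast at hk
      obtain ⟨u, hu, hzu⟩ := T.exists_tile_iff (x := s) (z := z + 2) |>.2 ⟨by omega, by omega, by omega⟩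
      obtain ⟨hl, hr⟩ := ih u hu (z + 2) (by omega) hzu
      have hsub := hT u hu t ht ⟨_, hzu, _, hz, rfl, by simp⟩
      have hne : u ≠ t := by
        rintro rfl
        have := (T.isDyck u hu).height_unique hz hzu
        omega
      obtain ⟨y1, hy1⟩ := hsub _ hl
      obtain ⟨y2, hy2⟩ := hsub _ hr
      simp only at hy1 hy2
      have s1 := (T.isDyck t ht).step_right (x := s - 1) (w := z) hy1 (by rwa [sub_add_cancel])
      have s2 := (T.isDyck t ht).step_right hz hy2
      have n1 : y1 ≠ z + 2 - 1 := by
        rintro rfl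
        exact hne (T.eq_of_mem hu ht hl hy1)
      have n2 : y2 ≠ z + 2 - 1 := by
        rintro rfl
        exact hne (T.eq_of_mem hu ht hr hy2)
      obtain rfl : y1 = z - 1 := by omega
      obtain rfl : y2 = z - 1 := by omega
      exact ⟨hy1, hy2⟩
  have hb := T.bounds_of_mem ht hz
  have hr := h.mem_Ioo
  have hp := T.upper.isDyckHt.parity hr.1.le hr.2.le
  exact key ((T.upper.ht s - 2 - z) / 2).toNat t ht z (by omega) hz

lemma lower_peak (h : HasBigPeak T s) (hT : T.CoverInclusive) :
    T.lower.ht s = T.lower.ht (s - 1) + 1 ∧ T.lower.ht (s + 1) = T.lower.ht s - 1 := by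
  have hr := h.mem_Ioo
  have s1 := T.lower.isDyckHt.step (s - 1) (by omega) (by omega)
  have s2 := T.lower.isDyckHt.step s (by omega) (by omega)
  rw [sub_add_cancel] at s1
  have p1 := T.lower.isDyckHt.parity hr.1.le hr.2.le
  have p2 := T.upper.isDyckHt.parity hr.1.le hr.2.le
  have hb := T.below s
  have hup := h.up
  have hdown := h.down
  rcases eq_or_ne (T.lower.ht s) (T.upper.ht s) with he | he
  · have := T.below (s - 1)
    have := T.below (s + 1)
    omega
  · obtain ⟨t, ht, hc⟩ := T.exists_tile_iff.2
      (⟨le_rfl, by omega, by omega⟩ : T.lower.ht s ≤ T.lower.ht s ∧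
        T.lower.ht s + 2 ≤ T.upper.ht s ∧ (T.lower.ht s - s - n) % 2 = 0)
    obtain ⟨h1, h2⟩ := h.neighbors_mem hT ht hc
    have := T.bounds_of_mem ht h1
    have := T.bounds_of_mem ht h2
    omega

lemma mem_of_left_mem (h : HasBigPeak T s) (hT : T.CoverInclusive) {t : Finset (ℤ × ℤ)}
    (ht : t ∈ T.tiles) {z : ℤ} (hz : (s - 1, z) ∈ t) : (s, z + 1) ∈ t := by
  have hb := T.bounds_of_mem ht hz
  have hl := h.lower_peak hT
  have hup := h.up
  obtain ⟨u, hu, hc⟩ := T.exists_tile_iff (x := s) (z := z + 1) |>.2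
    ⟨by omega, by omega, by omega⟩
  have := (h.neighbors_mem hT hu hc).1
  rw [add_sub_cancel_right] at this
  rwa [T.eq_of_mem ht hu hz this]

lemma mem_of_right_mem (h : HasBigPeak T s) (hT : T.CoverInclusive) {t : Finset (ℤ × ℤ)}
    (ht : t ∈ T.tiles) {z : ℤ} (hz : (s + 1, z) ∈ t) : (s, z + 1) ∈ t := by
  have hb := T.bounds_of_mem ht hz
  have hl := h.lower_peak hT
  have hdown := h.down
  obtain ⟨u, hu, hc⟩ := T.exists_tile_iff (x := s) (z := z + 1) |>.2
    ⟨by omega, by omega, by omega⟩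
  have := (h.neighbors_mem hT hu hc).2
  rw [add_sub_cancel_right] at this
  rwa [T.eq_of_mem ht hu hz this]

lemma spreadTile_image_pullPt (h : HasBigPeak T s) (hT : T.CoverInclusive)
    {t : Finset (ℤ × ℤ)} (ht : t ∈ T.tiles) : spreadTile s (t.image (pullPt s)) = t := by
  ext ⟨x, z⟩
  rw [mem_spreadTile, Finset.mem_image]
  refine ⟨?_, fun hc => ⟨_, hc, rfl⟩⟩
  rintro ⟨⟨x', z'⟩, hc, he⟩
  by_cases hx : x' = x
  · obtain rfl := hx
    simp only [pullPt, Prod.mk.injEq] at he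
    obtain rfl : z' = z := by
      have := he.2
      split_ifs at this <;> omega
    exact hc
  have near : (x' = s - 1 ∨ x' = s ∨ x' = s + 1) ∧ (x = s - 1 ∨ x = s ∨ x = s + 1) := by
    simp only [pullPt, pullCol, Prod.mk.injEq] at he
    have := he.1
    split_ifs at this <;> omega
  have hcenter : (s, if x' = s then z' else z' + 1) ∈ t := by
    rcases near.1 with rfl | rfl | rfl
    · rw [if_neg (by omega)]
      exact h.mem_of_left_mem hT ht hc
    · rwa [if_pos rfl]
    · rw [if_neg (by omega)]
      exact h.mem_of_right_mem hT ht hc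
  have hzz : (if x' = s then z' else z' + 1) = if x = s then z else z + 1 := by
    have := congrArg Prod.snd he
    simp only [pullPt] at this
    split_ifs at this ⊢ <;> omega
  rw [hzz] at hcenter
  have hnb := h.neighbors_mem hT ht hcenter
  rcases near.2 with rfl | rfl | rfl
  · rw [if_neg (by omega), add_sub_cancel_right] at hnb
    exact hnb.1
  · rwa [if_pos rfl] at hcenter
  · rw [if_neg (by omega), add_sub_cancel_right] at hnb
    exact hnb.2

end HasBigPeak

lemma exists_unspread {T' : DyckTiling (n + 1)} {s : ℤ} (h : HasBigPeak T' s)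
    (hT : T'.CoverInclusive) : ∃ T : DyckTiling n, IsSpread T s T' := by
  have hr := h.mem_Ioo
  push_cast at hr
  have hlow := h.lower_peak hT
  obtain ⟨L, hL⟩ := (T'.lower.isDyckHt.unspread (s := s) (by omega) (by omega)
    (by omega)).exists_path
  obtain ⟨U, hU⟩ := (T'.upper.isDyckHt.unspread (s := s) (by omega) (by omega)
    (by have := h.up; have := h.down; omega)).exists_path
  have hspread : ∀ t ∈ T'.tiles.image (fun t => t.image (pullPt s)), spreadTile s t ∈ T'.tiles := by
    intro t ht
    obtain ⟨u, hu, rfl⟩ := Finset.mem_image.1 ht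
    rwa [h.spreadTile_image_pullPt hT hu]
  refine ⟨⟨L, U, fun x => ?_, T'.tiles.image fun t => t.image (pullPt s), ?_, ?_, ?_⟩,
    fun x => ?_, fun x => ?_, ?_⟩
  · rw [hL, hU]
    exact T'.below _
  · exact fun t ht => (T'.isDyck _ (hspread t ht)).of_spreadTile
  · intro t ht u hu hne
    rw [Finset.disjoint_left]
    intro c hc hc'
    exact hne (spreadTile_injective s (T'.eq_of_mem (hspread t ht) (hspread u hu)
      (pushPt_mem_spreadTile.2 hc) (pushPt_mem_spreadTile.2 hc')))
  · ext ⟨x, z⟩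
    have key := T'.exists_tile_iff (x := (pushPt s (x, z)).1) (z := z)
    rw [mem_skewCells, hL, hU, unspreadHt, unspreadHt]
    have hpar : (z - (pushPt s (x, z)).1 - ((n + 1 : ℕ) : ℤ)) % 2 = 0 ↔ (z - x - n) % 2 = 0 := by
      simp only [pushPt]
      push_cast
      split_ifs <;> omega
    rw [hpar] at key
    refine Iff.trans ?_ key
    simp only [Finset.mem_biUnion, id_eq]
    constructor
    · rintro ⟨t, ht, hc⟩
      exact ⟨_, hspread t ht, pushPt_mem_spreadTile.2 hc⟩
    · rintro ⟨t, ht, hc⟩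
      refine ⟨_, Finset.mem_image_of_mem _ ht, ?_⟩
      rw [← pushPt_mem_spreadTile (s := s), h.spreadTile_image_pullPt hT ht]
      exact hc
  · exact (spreadHt_of_unspreadHt hL hlow.1 hlow.2 x).symm
  · exact (spreadHt_of_unspreadHt hU h.up h.down x).symm
  · ext t
    simp only [spreadTiles, Finset.image_image]
    constructor
    · intro ht
      exact Finset.mem_image.2 ⟨t, ht, h.spreadTile_image_pullPt hT ht⟩
    · intro ht
      obtain ⟨u, hu, rfl⟩ := Finset.mem_image.1 ht
      rwa [Function.comp_apply, h.spreadTile_image_pullPt hT hu]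

end Unspread

section Special

variable {n : ℕ}

lemma HasBigPeak.eligibleCol {T : DyckTiling n} {s : ℤ} (h : HasBigPeak T s) :
    EligibleCol T.upper.ht T.tiles s := ⟨h.up, h.top⟩

lemma EligibleCol.mem_Ioo {T : DyckTiling n} {c : ℤ} (h : EligibleCol T.upper.ht T.tiles c) :
    -(n : ℤ) < c ∧ c < n := by
  have h1 := h.1
  have h2 := T.upper.isDyckHt.nonneg (c - 1)
  exact T.upper.isDyckHt.mem_Ioo_of_pos (by omega)

lemma exists_specialCol (T : DyckTiling (n + 1)) : ∃ s, SpecialCol T s := by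
  have hne : EligibleCol T.upper.ht T.tiles (-n) := by
    have h0 := T.upper.isDyckHt.left (-n - 1) (by push_cast; omega)
    have h1 := T.upper.isDyckHt.step (-n - 1) (by push_cast; omega) (by push_cast; omega)
    have h2 := T.upper.isDyckHt.nonneg (-n)
    rw [sub_add_cancel] at h1
    refine ⟨by omega, fun hc => ?_⟩
    have h3 := T.bounds_of_mem hc (Finset.mem_singleton_self _)
    have h4 := T.lower.isDyckHt.nonneg (-n)
    omega
  obtain ⟨s, hs, hmax⟩ := Int.exists_greatest_of_bdd
    (P := fun c => EligibleCol T.upper.ht T.tiles c)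
    ⟨n + 1, fun z hz => by have := hz.mem_Ioo; push_cast at this; omega⟩ ⟨_, hne⟩
  exact ⟨s, hs, hmax⟩

lemma SpecialCol.unique {T : DyckTiling n} {s s' : ℤ} (h : SpecialCol T s)
    (h' : SpecialCol T s') : s = s' :=
  le_antisymm (h'.2 s h.1) (h.2 s' h'.1)

lemma SpecialCol.top_mem_of_up {T : DyckTiling n} {s x : ℤ} (h : SpecialCol T s) (hx : s < x)
    (hup : T.upper.ht x = T.upper.ht (x - 1) + 1) :
    ({(x, T.upper.ht x - 2)} : Finset (ℤ × ℤ)) ∈ T.tiles := by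
  by_contra hc
  exact absurd (h.2 x ⟨hup, hc⟩) (by omega)

end Special

/-- The properties of a one-step growth process that make the iterated process a bijection onto
cover-inclusive tilings: growth at each column is a well-defined injective operation which makes
that column special, and every nonempty cover-inclusive tiling arises by growth. -/
structure IsGrowth (G : ∀ n : ℕ, DyckTiling n → ℤ → DyckTiling (n + 1) → Prop) : Prop where
  exists_grow : ∀ {n : ℕ} (T : DyckTiling n) {s : ℤ}, -(n : ℤ) ≤ s → s ≤ n → ∃ T', G n T s T'
  unique : ∀ {n : ℕ} {T : DyckTiling n} {s : ℤ} {T' R' : DyckTiling (n + 1)},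
    G n T s T' → G n T s R' → T' = R'
  coverInclusive : ∀ {n : ℕ} {T : DyckTiling n} {s : ℤ} {T' : DyckTiling (n + 1)},
    -(n : ℤ) ≤ s → s ≤ n → G n T s T' → T.CoverInclusive → T'.CoverInclusive
  special : ∀ {n : ℕ} {T : DyckTiling n} {s : ℤ} {T' : DyckTiling (n + 1)},
    -(n : ℤ) ≤ s → s ≤ n → G n T s T' → SpecialCol T' s
  injective : ∀ {n : ℕ} {T R : DyckTiling n} {s : ℤ} {T' : DyckTiling (n + 1)},
    -(n : ℤ) ≤ s → s ≤ n → G n T s T' → G n R s T' → T = R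
  exists_shrink : ∀ {n : ℕ} {T' : DyckTiling (n + 1)}, T'.CoverInclusive →
    ∃ (T : DyckTiling n) (s : ℤ), T.CoverInclusive ∧ -(n : ℤ) ≤ s ∧ s ≤ n ∧ G n T s T'

section Strip

variable {n : ℕ}

/-- The columns in which strip-grow at `s` adds a box, for the spread upper path `h`. -/
def stripCols (n : ℕ) (s : ℤ) (h : ℤ → ℤ) : Finset ℤ :=
  (Finset.Icc s (n : ℤ)).filter fun x => h (x + 1) = h x + 1

lemma IsDyckHt.mem_stripCols {h : ℤ → ℤ} (hh : IsDyckHt (n + 1) h) {s x : ℤ} :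
    x ∈ stripCols n s h ↔ s ≤ x ∧ h (x + 1) = h x + 1 := by
  simp only [stripCols, Finset.mem_filter, Finset.mem_Icc]
  constructor
  · rintro ⟨⟨h1, -⟩, h2⟩
    exact ⟨h1, h2⟩
  · rintro ⟨h1, h2⟩
    have h3 := hh.nonneg x
    have h4 := hh.mem_Ioo_of_pos (x := x + 1) (by omega)
    push_cast at h4
    exact ⟨⟨h1, by omega⟩, h2⟩

lemma stripGrowRel_iff {T : DyckTiling n} {s : ℤ} {T' : DyckTiling (n + 1)}
    (h1 : -(n : ℤ) ≤ s) (h2 : s ≤ n) :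
    StripGrowRel T s T' ↔ ∃ T'' : DyckTiling (n + 1),
      IsSpread T s T'' ∧ IsLayer T'' (stripCols n s T''.upper.ht) T' := by
  have key : ∀ T'' : DyckTiling (n + 1), IsSpread T s T'' →
      (StripGrowRel T s T' ↔ IsLayer T'' (stripCols n s T''.upper.ht) T') := by
    intro T'' h
    have e : ∀ x, T''.upper.ht x = spreadHt T.upper s x := h.upper
    constructor
    · rintro ⟨hl, hu, ht⟩
      refine ⟨fun x => by rw [hl, h.lower], fun x => ?_, ?_⟩
      · simp only [T''.upper.isDyckHt.mem_stripCols, hu, e]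
      · simp only [ht, h.tiles, stripCols, e]
    · rintro ⟨hl, hu, ht⟩
      refine ⟨fun x => by rw [hl, h.lower], fun x => ?_, ?_⟩
      · rw [hu]
        simp only [T''.upper.isDyckHt.mem_stripCols, e]
      · simp only [ht, h.tiles, stripCols, e]
  constructor
  · intro h
    obtain ⟨T'', hT⟩ := exists_spread T h1 h2
    exact ⟨T'', hT, (key T'' hT).1 h⟩
  · rintro ⟨T'', hT, h⟩
    exact (key T'' hT).2 h

section Heights

variable {h h' : ℤ → ℤ} {s : ℤ}

lemma stripHt_eq (hh : IsDyckHt (n + 1) h) (hs : -(n : ℤ) ≤ s)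
    (hh' : ∀ x, h' x = if x ∈ stripCols n s h then h x + 2 else h x) {x : ℤ} (h1 : s ≤ x)
    (h2 : x ≤ n) : h' x = h (x + 1) + 1 := by
  have := hh.step x (by push_cast; omega) (by push_cast; omega)
  rw [hh']
  split_ifs with hx
  · rw [hh.mem_stripCols] at hx
    omega
  · rw [hh.mem_stripCols] at hx
    omega

lemma stripHt_left (hh : IsDyckHt (n + 1) h) (hdown : h (s + 1) = h s - 1)
    (hh' : ∀ x, h' x = if x ∈ stripCols n s h then h x + 2 else h x) {x : ℤ} (h1 : x ≤ s) :
    h' x = h x := by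
  rw [hh', if_neg]
  rw [hh.mem_stripCols]
  rintro ⟨h2, h3⟩
  obtain rfl : x = s := by omega
  omega

lemma stripHt_right (hh' : ∀ x, h' x = if x ∈ stripCols n s h then h x + 2 else h x) {x : ℤ}
    (h1 : (n : ℤ) < x) : h' x = h x := by
  rw [hh', if_neg]
  simp only [stripCols, Finset.mem_filter, Finset.mem_Icc]
  omega

lemma isDyckHt_stripHt (hh : IsDyckHt (n + 1) h) (hs : -(n : ℤ) ≤ s)
    (hdown : h (s + 1) = h s - 1)
    (hh' : ∀ x, h' x = if x ∈ stripCols n s h then h x + 2 else h x) : IsDyckHt (n + 1) h' where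
  left x hx := by
    rw [stripHt_left hh hdown hh' (by push_cast at hx; omega)]
    exact hh.left x hx
  right x hx := by
    rw [stripHt_right hh' (by push_cast at hx; omega)]
    exact hh.right x hx
  nonneg x := by
    have := hh.nonneg x
    rw [hh']
    split_ifs <;> omega
  step x hx1 hx2 := by
    push_cast at hx1 hx2
    rcases lt_or_ge x s with hx | hx
    · rw [stripHt_left hh hdown hh' (by omega), stripHt_left hh hdown hh' (by omega)]
      exact hh.step x (by push_cast; omega) (by push_cast; omega)
    · rw [stripHt_eq hh hs hh' hx (by omega)]
      rcases eq_or_ne x n with rfl | hn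
      · rw [stripHt_right hh' (by omega)]
        omega
      · rw [stripHt_eq hh hs hh' (by omega) (by omega)]
        have := hh.step (x + 1) (by push_cast; omega) (by push_cast; omega)
        omega

lemma mem_stripCols_iff_raised (hh : IsDyckHt (n + 1) h) (hs : -(n : ℤ) ≤ s)
    (hdown : h (s + 1) = h s - 1)
    (hh' : ∀ x, h' x = if x ∈ stripCols n s h then h x + 2 else h x) {x : ℤ} :
    x ∈ stripCols n s h ↔ s < x ∧ x ≤ n ∧ h' x = h' (x - 1) + 1 := by
  by_cases hx : s < x ∧ x ≤ n
  · have h1 := stripHt_eq hh hs hh' (x := x - 1) (by omega) (by omega)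
    rw [sub_add_cancel] at h1
    have h2 := hh' x
    split_ifs at h2 with h3
    · exact iff_of_true h3 ⟨hx.1, hx.2, by omega⟩
    · exact iff_of_false h3 (by omega)
  · refine iff_of_false (fun hc => hx ?_) (by tauto)
    have := hh.mem_stripCols.1 hc
    simp only [stripCols, Finset.mem_filter, Finset.mem_Icc] at hc
    refine ⟨lt_of_le_of_ne hc.1.1 ?_, hc.1.2⟩
    rintro rfl
    omega

end Heights

lemma exists_stripShrink {T' : DyckTiling (n + 1)} {s : ℤ}
    (hs : SpecialCol T' s) : ∃ T'' : DyckTiling (n + 1),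
      IsLayer T'' (stripCols n s T''.upper.ht) T' ∧ HasBigPeak T'' s := by
  have hup := hs.1.1
  have hr := hs.1.mem_Ioo
  push_cast at hr
  have hM := T'.upper.isDyckHt
  have hMn : ∀ x, s < x → x ≤ n + 1 → T'.upper.ht x = T'.upper.ht (x - 1) + 1 ∨
      T'.upper.ht x = T'.upper.ht (x - 1) - 1 := by
    intro x h1 h2
    have := hM.step (x - 1) (by push_cast; omega) (by push_cast; omega)
    rwa [sub_add_cancel] at this
  set A : Finset ℤ := (Finset.Ioc s (n : ℤ)).filter
    fun x => T'.upper.ht x = T'.upper.ht (x - 1) + 1 with hA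
  have memA : ∀ x, x ∈ A ↔ s < x ∧ x ≤ n ∧ T'.upper.ht x = T'.upper.ht (x - 1) + 1 := by
    intro x
    simp only [hA, Finset.mem_filter, Finset.mem_Ioc, and_assoc]
  set h : ℤ → ℤ := fun x => if x ∈ A then T'.upper.ht x - 2 else T'.upper.ht x with hh
  have hleft : ∀ x, x ≤ s → h x = T'.upper.ht x := by
    intro x hx
    simp only [hh]
    rw [if_neg (by rw [memA]; omega)]
  have hlast : T'.upper.ht (n + 1) = 0 := hM.right _ (by push_cast; omega)
  have hright : ∀ x, s < x → x ≤ n + 1 → h x = T'.upper.ht (x - 1) - 1 := by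
    intro x h1 h2
    have h3 := hMn x h1 h2
    simp only [hh]
    split_ifs with h4
    · rw [memA] at h4; omega
    · rw [memA] at h4
      rcases eq_or_ne x (n + 1) with rfl | hne
      · have := hM.nonneg (n + 1 - 1)
        omega
      · omega
  have htop : ∀ x ∈ A, ({(x, h x)} : Finset (ℤ × ℤ)) ∈ T'.tiles := by
    intro x hx
    simp only [hh, if_pos hx]
    rw [memA] at hx
    exact hs.top_mem_of_up hx.1 hx.2.2
  have hD : IsDyckHt (n + 1) h := by
    refine ⟨fun x hx => ?_, fun x hx => ?_, fun x => ?_, fun x hx1 hx2 => ?_⟩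
    · push_cast at hx
      rw [hleft x (by omega)]
      exact hM.left x (by push_cast; omega)
    · push_cast at hx
      simp only [hh]
      rw [if_neg (by rw [memA]; omega)]
      exact hM.right x (by push_cast; omega)
    · by_cases hx : x ∈ A
      · have h1 := T'.bounds_of_mem (htop x hx) (Finset.mem_singleton_self _)
        have h2 := T'.lower.isDyckHt.nonneg x
        omega
      · simp only [hh, if_neg hx]
        exact hM.nonneg x
    · push_cast at hx1 hx2
      rcases lt_trichotomy x s with hx | rfl | hx
      · rw [hleft x (by omega), hleft (x + 1) (by omega)]
        exact hM.step x (by push_cast; omega) (by push_cast; omega)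
      · rw [hleft x le_rfl, hright (x + 1) (by omega) (by omega), add_sub_cancel_right]
        exact Or.inr rfl
      · rw [hright x (by omega) (by omega), hright (x + 1) (by omega) (by omega),
          add_sub_cancel_right]
        have := hMn x hx (by omega)
        omega
  obtain ⟨T'', hL, hU⟩ := exists_layer_removed T' A hD
    (fun x => by simp only [hh]; split_ifs <;> omega) htop
  have hs1 := hright (s + 1) (by omega) (by omega)
  rw [add_sub_cancel_right] at hs1
  refine ⟨T'', ?_, ?_, ?_, ?_⟩
  · convert hL
    ext x
    rw [T''.upper.isDyckHt.mem_stripCols, hU, hU, memA]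
    rcases lt_trichotomy x s with hx | rfl | hx
    · omega
    · have := hleft x le_rfl
      omega
    · rcases le_or_gt x n with hn | hn
      · have h1 := hright x (by omega) (by omega)
        have h2 := hright (x + 1) (by omega) (by omega)
        rw [add_sub_cancel_right] at h2
        omega
      · have h1 := hD.right x (by push_cast; omega)
        have h2 := hD.right (x + 1) (by push_cast; omega)
        omega
  · rw [hU, hU, hleft s le_rfl, hleft (s - 1) (by omega)]
    exact hup
  · rw [hU, hU, hleft s le_rfl, hs1]
  · rw [hU, hleft s le_rfl, ← hL.mem_tiles_iff_of_not_mem (by rw [memA]; omega)]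
    exact hs.1.2

theorem isGrowth_strip : IsGrowth fun _ T s T' => StripGrowRel T s T' where
  exists_grow {n} T s h1 h2 := by
    obtain ⟨T'', hT⟩ := exists_spread T h1 h2
    obtain ⟨T', hT'⟩ := exists_layer T'' (stripCols n s T''.upper.ht)
      (isDyckHt_stripHt T''.upper.isDyckHt h1 hT.hasBigPeak.down fun _ => rfl)
    exact ⟨T', (stripGrowRel_iff h1 h2).2 ⟨T'', hT, hT'⟩⟩
  unique {n T s T' R'} h h' := DyckTiling.ext_of_ht (fun x => by rw [h.1, h'.1])
    (fun x => by rw [h.2.1, h'.2.1]) (by rw [h.2.2, h'.2.2])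
  coverInclusive {n T s T'} h1 h2 h hT := by
    obtain ⟨T'', hS, hL⟩ := (stripGrowRel_iff h1 h2).1 h
    exact hL.coverInclusive (hS.coverInclusive hT)
  special {n T s T'} h1 h2 h := by
    obtain ⟨T'', hS, hL⟩ := (stripGrowRel_iff h1 h2).1 h
    have hmem := fun x => mem_stripCols_iff_raised (x := x) T''.upper.isDyckHt h1
      hS.hasBigPeak.down hL.upper
    have hleft := fun x => stripHt_left (x := x) T''.upper.isDyckHt hS.hasBigPeak.down hL.upper
    have hp := hS.hasBigPeak
    refine ⟨⟨?_, ?_⟩, fun c hc => ?_⟩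
    · rw [hleft s le_rfl, hleft (s - 1) (by omega)]
      exact hp.up
    · rw [hleft s le_rfl, hL.mem_tiles_iff_of_not_mem (by rw [hmem]; omega)]
      exact hp.top
    · by_contra hlt
      have := hc.mem_Ioo
      push_cast at this
      exact hc.2 (hL.top_mem ((hmem c).2 ⟨by omega, by omega, hc.1⟩))
  injective {n T R s T'} h1 h2 h h' := by
    obtain ⟨T'', hS, hL⟩ := (stripGrowRel_iff h1 h2).1 h
    obtain ⟨R'', hS', hL'⟩ := (stripGrowRel_iff h1 h2).1 h'
    have e : stripCols n s T''.upper.ht = stripCols n s R''.upper.ht := by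
      ext x
      rw [mem_stripCols_iff_raised T''.upper.isDyckHt h1 hS.hasBigPeak.down hL.upper,
        mem_stripCols_iff_raised R''.upper.isDyckHt h1 hS'.hasBigPeak.down hL'.upper]
    rw [e] at hL
    obtain rfl := hL.injective hL'
    exact hS.injective hS'
  exists_shrink {n T'} hT := by
    obtain ⟨s, hs⟩ := exists_specialCol T'
    obtain ⟨T'', hL, hp⟩ := exists_stripShrink hs
    have hT'' := hL.coverInclusive_of hT
    obtain ⟨T, hS⟩ := exists_unspread hp hT''
    have hr := hS.mem_range
    exact ⟨T, s, hS.coverInclusive_of hT'', hr.1, hr.2,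
      (stripGrowRel_iff hr.1 hr.2).2 ⟨T'', hS, hL⟩⟩

end Strip

section Ribbon

variable {n : ℕ}

lemma ribbonGrowRel_iff {T : DyckTiling n} {s : ℤ} {T' : DyckTiling (n + 1)}
    (h1 : -(n : ℤ) ≤ s) (h2 : s ≤ n) :
    RibbonGrowRel T s T' ↔ ∃ (T'' : DyckTiling (n + 1)) (Q : ℤ),
      IsSpread T s T'' ∧ SpecialCol T'' Q ∧ IsLayer T'' (Finset.Ioo s Q) T' := by
  constructor
  · rintro ⟨hl, Q, hQ, hmax, hu, ht⟩
    obtain ⟨T'', hT⟩ := exists_spread T h1 h2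
    have e : T''.upper.ht = spreadHt T.upper s := funext hT.upper
    rw [← e, ← hT.tiles] at hQ hmax
    refine ⟨T'', Q, hT, ⟨hQ, hmax⟩, fun x => by rw [hl, hT.lower], fun x => ?_, ?_⟩
    · rw [hu, e]
      simp only [Finset.mem_Ioo]
    · rw [ht, hT.tiles, e]
  · rintro ⟨T'', Q, hT, ⟨hQ, hmax⟩, hL⟩
    have e : T''.upper.ht = spreadHt T.upper s := funext hT.upper
    rw [e, hT.tiles] at hQ hmax
    refine ⟨fun x => by rw [hL.lower, hT.lower], Q, hQ, hmax, fun x => ?_, ?_⟩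
    · rw [hL.upper, e]
      simp only [Finset.mem_Ioo]
    · rw [hL.tiles, hT.tiles, e]

lemma HasBigPeak.le_specialCol {T : DyckTiling n} {s Q : ℤ} (h : HasBigPeak T s)
    (hQ : SpecialCol T Q) : Q = s ∨ s + 2 ≤ Q := by
  have h1 := hQ.2 s h.eligibleCol
  have h2 : Q ≠ s + 1 := by
    rintro rfl
    have := hQ.1.1
    rw [add_sub_cancel_right] at this
    have := h.down
    omega
  omega

lemma isDyckHt_ribbonHt {T : DyckTiling n} {s Q : ℤ} (h : HasBigPeak T s) (hQ : SpecialCol T Q) :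
    IsDyckHt n fun x => if x ∈ Finset.Ioo s Q then T.upper.ht x + 2 else T.upper.ht x := by
  have hle := h.le_specialCol hQ
  have hU := T.upper.isDyckHt
  have hs := h.mem_Ioo
  have hQr := hQ.1.mem_Ioo
  refine ⟨fun x hx => ?_, fun x hx => ?_, fun x => ?_, fun x hx1 hx2 => ?_⟩
  · simp only [Finset.mem_Ioo]
    rw [if_neg (by omega)]
    exact hU.left x hx
  · simp only [Finset.mem_Ioo]
    rw [if_neg (by omega)]
    exact hU.right x hx
  · have := hU.nonneg x
    split_ifs <;> omega
  · have h1 := hU.step x hx1 hx2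
    have hdown := h.down
    have hup := hQ.1.1
    simp only [Finset.mem_Ioo]
    rcases eq_or_ne x s with rfl | hxs
    · split_ifs <;> omega
    rcases eq_or_ne (x + 1) Q with hxQ | hxQ
    · rw [← hxQ, add_sub_cancel_right] at hup
      split_ifs <;> omega
    split_ifs <;> omega

lemma exists_ribbonShrink {T' : DyckTiling (n + 1)} (hT : T'.CoverInclusive) {s : ℤ}
    (hs : SpecialCol T' s) : ∃ (T'' : DyckTiling (n + 1)) (Q : ℤ),
      SpecialCol T'' Q ∧ IsLayer T'' (Finset.Ioo s Q) T' ∧ HasBigPeak T'' s := by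
  have hup := hs.1.1
  have hr := hs.1.mem_Ioo
  push_cast at hr
  have hM := T'.upper.isDyckHt
  have hlast : s < (n : ℤ) + 1 ∧
      ({((n : ℤ) + 1, T'.upper.ht (n + 1) - 2)} : Finset (ℤ × ℤ)) ∉ T'.tiles := by
    refine ⟨hr.2, fun hc => ?_⟩
    have h1 := T'.bounds_of_mem hc (Finset.mem_singleton_self _)
    have h2 := T'.lower.isDyckHt.nonneg (n + 1)
    have h3 := hM.right (n + 1) (by push_cast; omega)
    omega
  obtain ⟨r, ⟨hsr, hrt⟩, hmin⟩ := Int.exists_least_of_bdd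
    (P := fun x => s < x ∧ ({(x, T'.upper.ht x - 2)} : Finset (ℤ × ℤ)) ∉ T'.tiles)
    ⟨s, fun z hz => hz.1.le⟩ ⟨_, hlast⟩
  have hrn : r ≤ n + 1 := hmin _ hlast
  have hbox : ∀ x, s < x → x < r →
      ({(x, T'.upper.ht x - 2)} : Finset (ℤ × ℤ)) ∈ T'.tiles := by
    intro x h1 h2
    by_contra hc
    exact absurd (hmin x ⟨h1, hc⟩) (by omega)
  have hrdown : T'.upper.ht r = T'.upper.ht (r - 1) - 1 := by
    have h1 := hM.step (r - 1) (by push_cast; omega) (by push_cast; omega)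
    rw [sub_add_cancel] at h1
    exact h1.resolve_left fun hc => hrt (hs.top_mem_of_up hsr hc)
  have hsup : s + 1 < r → T'.upper.ht (s + 1) = T'.upper.ht s + 1 := by
    intro h1
    have h2 := hM.step s (by push_cast; omega) (by push_cast; omega)
    refine h2.resolve_right fun hc => ?_
    have := HasBigPeak.mem_of_right_mem ⟨hup, hc, hs.1.2⟩ hT (hbox (s + 1) (by omega) h1)
      (Finset.mem_singleton_self _)
    rw [Finset.mem_singleton, Prod.mk.injEq] at this
    omega
  set h : ℤ → ℤ := fun x => if x ∈ Finset.Ioo s r then T'.upper.ht x - 2 else T'.upper.ht x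
    with hh
  have hin : ∀ x, s < x → x < r → h x = T'.upper.ht x - 2 := fun x h1 h2 =>
    if_pos (Finset.mem_Ioo.2 ⟨h1, h2⟩)
  have hout : ∀ x, x ≤ s ∨ r ≤ x → h x = T'.upper.ht x := fun x h1 =>
    if_neg (by rw [Finset.mem_Ioo]; omega)
  have htop : ∀ x ∈ Finset.Ioo s r, ({(x, h x)} : Finset (ℤ × ℤ)) ∈ T'.tiles := by
    intro x hx
    rw [Finset.mem_Ioo] at hx
    rw [hin x hx.1 hx.2]
    exact hbox x hx.1 hx.2
  have hdown : h (s + 1) = h s - 1 := by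
    rw [hout s (Or.inl le_rfl)]
    rcases eq_or_lt_of_le (show s + 1 ≤ r by omega) with he | hlt
    · rw [hout (s + 1) (Or.inr he.ge), he, hrdown, ← he, add_sub_cancel_right]
    · rw [hin (s + 1) (by omega) hlt, hsup hlt]
      ring
  have hD : IsDyckHt (n + 1) h := by
    refine ⟨fun x hx => ?_, fun x hx => ?_, fun x => ?_, fun x hx1 hx2 => ?_⟩
    · push_cast at hx
      rw [hout x (by omega)]
      exact hM.left x (by push_cast; omega)
    · push_cast at hx
      rw [hout x (by omega)]
      exact hM.right x (by push_cast; omega)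
    · by_cases hx : x ∈ Finset.Ioo s r
      · have h1 := T'.bounds_of_mem (htop x hx) (Finset.mem_singleton_self _)
        have h2 := T'.lower.isDyckHt.nonneg x
        omega
      · simp only [hh, if_neg hx]
        exact hM.nonneg x
    · have h1 := hM.step x hx1 hx2
      rcases eq_or_ne x s with rfl | hxs
      · exact Or.inr hdown
      rcases lt_or_ge x s with hx | hx
      · rwa [hout x (by omega), hout (x + 1) (by omega)]
      rcases lt_trichotomy (x + 1) r with hx' | rfl | hx'
      · rw [hin x (by omega) (by omega), hin (x + 1) (by omega) hx']
        omega
      · rw [add_sub_cancel_right] at hrdown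
        rw [hin x (by omega) (by omega), hout (x + 1) (by omega)]
        omega
      · rwa [hout x (by omega), hout (x + 1) (by omega)]
  obtain ⟨T'', hL, hU⟩ := exists_layer_removed T' (Finset.Ioo s r) hD
    (fun x => by simp only [hh]; split_ifs <;> omega) htop
  have hp : HasBigPeak T'' s := by
    refine ⟨?_, ?_, ?_⟩
    · rw [hU, hU, hout s (Or.inl le_rfl), hout (s - 1) (by omega)]
      exact hup
    · rw [hU, hU, hdown]
    · rw [hU, hout s (Or.inl le_rfl),
        ← hL.mem_tiles_iff_of_not_mem (by rw [Finset.mem_Ioo]; omega)]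
      exact hs.1.2
  have helig : ∀ c, (c ≤ s ∨ r ≤ c) → (c - 1 ≤ s ∨ r ≤ c - 1) →
      EligibleCol T''.upper.ht T''.tiles c → c ≤ s := by
    rintro c h1 h2 ⟨h3, h4⟩
    rw [hU, hU, hout c h1, hout (c - 1) h2] at h3
    rw [hU, hout c h1, ← hL.mem_tiles_iff_of_not_mem (by rw [Finset.mem_Ioo]; omega)] at h4
    exact hs.2 c ⟨h3, h4⟩
  rcases eq_or_lt_of_le (show s + 1 ≤ r by omega) with he | hlt
  · refine ⟨T'', s, ⟨hp.eligibleCol, fun c hc => ?_⟩, ?_, hp⟩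
    · exact helig c (by omega) (by omega) hc
    · convert hL using 1
      ext x
      simp only [Finset.mem_Ioo]
      omega
  · refine ⟨T'', r, ⟨⟨?_, ?_⟩, fun c hc => ?_⟩, hL, hp⟩
    · rw [hU, hU, hout r (Or.inr le_rfl), hin (r - 1) (by omega) (by omega), hrdown]
      ring
    · rw [hU, hout r (Or.inr le_rfl),
        ← hL.mem_tiles_iff_of_not_mem (by rw [Finset.mem_Ioo]; omega)]
      exact hrt
    · by_contra hlt
      have := helig c (by omega) (by omega) hc
      omega

lemma ribbon_end_le {T R T' : DyckTiling n} {s Q Q' : ℤ} (hp : HasBigPeak T s)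
    (hp' : HasBigPeak R s) (hQ : SpecialCol T Q) (hQ' : SpecialCol R Q')
    (hL : IsLayer T (Finset.Ioo s Q) T') (hL' : IsLayer R (Finset.Ioo s Q') T') : Q' ≤ Q := by
  by_contra hlt
  have h1 := hp.le_specialCol hQ
  have h2 := hp'.le_specialCol hQ'
  rcases h1 with rfl | h1
  · have a1 := hL.upper Q
    have a2 := hL.upper (Q + 1)
    have b1 := hL'.upper Q
    have b2 := hL'.upper (Q + 1)
    simp only [Finset.mem_Ioo] at a1 a2 b1 b2
    rw [if_neg (by omega)] at a1 a2 b1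
    rw [if_pos (by omega)] at b2
    have := hp.down
    have := hp'.down
    omega
  · have h3 := hL'.top_mem (x := Q) (by rw [Finset.mem_Ioo]; omega)
    have h4 : Q ∉ Finset.Ioo s Q := by simp
    rw [hL.mem_tiles_iff_of_not_mem h4, hL.upper, if_neg h4] at h3
    exact hQ.1.2 h3

theorem isGrowth_ribbon : IsGrowth fun _ T s T' => RibbonGrowRel T s T' where
  exists_grow {n} T s h1 h2 := by
    obtain ⟨T'', hT⟩ := exists_spread T h1 h2
    obtain ⟨Q, hQ⟩ := exists_specialCol T''
    obtain ⟨T', hT'⟩ := exists_layer T'' (Finset.Ioo s Q) (isDyckHt_ribbonHt hT.hasBigPeak hQ)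
    exact ⟨T', (ribbonGrowRel_iff h1 h2).2 ⟨T'', Q, hT, hQ, hT'⟩⟩
  unique {n T s T' R'} h h' := by
    obtain ⟨hl, Q, hQ, hmax, hu, ht⟩ := h
    obtain ⟨hl', Q', hQ', hmax', hu', ht'⟩ := h'
    obtain rfl : Q = Q' := le_antisymm (hmax' Q hQ) (hmax Q' hQ')
    exact DyckTiling.ext_of_ht (fun x => by rw [hl, hl']) (fun x => by rw [hu, hu'])
      (by rw [ht, ht'])
  coverInclusive {n T s T'} h1 h2 h hT := by
    obtain ⟨T'', Q, hS, -, hL⟩ := (ribbonGrowRel_iff h1 h2).1 h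
    exact hL.coverInclusive (hS.coverInclusive hT)
  special {n T s T'} h1 h2 h := by
    obtain ⟨T'', Q, hS, hQ, hL⟩ := (ribbonGrowRel_iff h1 h2).1 h
    have hp := hS.hasBigPeak
    have hle := hp.le_specialCol hQ
    have hout : ∀ x, x ≤ s ∨ Q ≤ x → T'.upper.ht x = T''.upper.ht x := fun x hx => by
      rw [hL.upper, if_neg (by rw [Finset.mem_Ioo]; omega)]
    refine ⟨⟨?_, ?_⟩, fun c hc => ?_⟩
    · rw [hout s (by omega), hout (s - 1) (by omega)]
      exact hp.up
    · rw [hout s (by omega), hL.mem_tiles_iff_of_not_mem (by rw [Finset.mem_Ioo]; omega)]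
      exact hp.top
    · by_contra hlt
      rcases lt_trichotomy c Q with hcQ | rfl | hcQ
      · exact hc.2 (hL.top_mem (by rw [Finset.mem_Ioo]; omega))
      · have a1 := hc.1
        have a2 := hL.upper (c - 1)
        rw [if_pos (by rw [Finset.mem_Ioo]; omega)] at a2
        rw [hout c (by omega)] at a1
        have := hQ.1.1
        omega
      · obtain ⟨h3, h4⟩ := hc
        rw [hout c (by omega), hout (c - 1) (by omega)] at h3
        rw [hout c (by omega), hL.mem_tiles_iff_of_not_mem (by rw [Finset.mem_Ioo]; omega)] at h4
        exact absurd (hQ.2 c ⟨h3, h4⟩) (by omega)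
  injective {n T R s T'} h1 h2 h h' := by
    obtain ⟨T'', Q, hS, hQ, hL⟩ := (ribbonGrowRel_iff h1 h2).1 h
    obtain ⟨R'', Q', hS', hQ', hL'⟩ := (ribbonGrowRel_iff h1 h2).1 h'
    obtain rfl : Q = Q' := le_antisymm
      (ribbon_end_le hS'.hasBigPeak hS.hasBigPeak hQ' hQ hL' hL)
      (ribbon_end_le hS.hasBigPeak hS'.hasBigPeak hQ hQ' hL hL')
    obtain rfl := hL.injective hL'
    exact hS.injective hS'
  exists_shrink {n T'} hT := by
    obtain ⟨s, hs⟩ := exists_specialCol T'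
    obtain ⟨T'', Q, hQ, hL, hp⟩ := exists_ribbonShrink hT hs
    have hT'' := hL.coverInclusive_of hT
    obtain ⟨T, hS⟩ := exists_unspread hp hT''
    have hr := hS.mem_range
    exact ⟨T, s, hS.coverInclusive_of hT'', hr.1, hr.2,
      (ribbonGrowRel_iff hr.1 hr.2).2 ⟨T'', Q, hS, hQ, hL⟩⟩

end Ribbon

section Iteration

lemma eq_of_order_zero (T R : DyckTiling 0) : T = R := by
  have hz : ∀ (P : DyckPath 0) (x : ℤ), P.ht x = 0 := by
    intro P x
    rcases le_total x 0 with h | h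
    · exact P.isDyckHt.left x (by simpa using h)
    · exact P.isDyckHt.right x (by simpa using h)
  have he : ∀ S : DyckTiling 0, S.tiles = ∅ := by
    intro S
    refine Finset.eq_empty_of_forall_notMem fun t ht => ?_
    obtain ⟨⟨x, z⟩, hc⟩ := (S.isDyck t ht).nonempty
    have := S.bounds_of_mem ht hc
    rw [hz, hz] at this
    omega
  exact DyckTiling.ext_of_ht (fun x => by rw [hz, hz]) (fun x => by rw [hz, hz])
    (by rw [he, he])

lemma nonempty_order_zero : Nonempty (DyckTiling 0) := by
  obtain ⟨P, hP⟩ := (show IsDyckHt 0 fun _ => 0 from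
    ⟨fun _ _ => rfl, fun _ _ => rfl, fun _ => le_rfl,
      fun x h1 h2 => by push_cast at h1 h2; omega⟩).exists_path
  refine ⟨⟨P, P, fun _ => le_rfl, ∅, by simp, by simp, ?_⟩⟩
  ext ⟨x, z⟩
  rw [mem_skewCells, hP]
  simp
  omega

lemma coverInclusive_order_zero (T : DyckTiling 0) : T.CoverInclusive := by
  intro t ht
  obtain ⟨⟨x, z⟩, hc⟩ := (T.isDyck t ht).nonempty
  have h1 := T.bounds_of_mem ht hc
  have h2 := T.lower.isDyckHt.nonneg x
  have h3 := T.upper.isDyckHt.mem_Ioo_of_pos (x := x) (by omega)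
  push_cast at h3
  omega

/-- Iterating a growth process is a bijection from bounded sequences onto cover-inclusive
tilings. -/
theorem IsGrowth.bijective {G : ∀ n : ℕ, DyckTiling n → ℤ → DyckTiling (n + 1) → Prop}
    (hG : IsGrowth G) {D : ∀ n : ℕ, (Fin n → ℕ) → DyckTiling n → Prop}
    (hzero : ∀ p T, D 0 p T)
    (hsucc : ∀ n p T', D (n + 1) p T' ↔
      ∃ T, D n (fun i => p i.castSucc) T ∧ G n T ((p (Fin.last n) : ℤ) - n) T') (n : ℕ) :
    (∀ p : Fin n → ℕ, (∀ i, p i ≤ 2 * (i : ℕ)) →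
      (∃! T, D n p T) ∧ ∀ T, D n p T → T.CoverInclusive) ∧
    ∀ T : DyckTiling n, T.CoverInclusive →
      ∃! p : Fin n → ℕ, (∀ i, p i ≤ 2 * (i : ℕ)) ∧ D n p T := by
  induction n with
  | zero =>
    obtain ⟨T₀⟩ := nonempty_order_zero
    exact ⟨fun p _ => ⟨⟨T₀, hzero _ _, fun T _ => eq_of_order_zero T T₀⟩,
      fun T _ => coverInclusive_order_zero T⟩,
      fun T _ => ⟨Fin.elim0, ⟨fun i => i.elim0, hzero _ _⟩, fun p _ => Subsingleton.elim _ _⟩⟩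
  | succ n ih =>
    obtain ⟨ih1, ih2⟩ := ih
    have bound : ∀ p : Fin (n + 1) → ℕ, (∀ i, p i ≤ 2 * (i : ℕ)) →
        (∀ i : Fin n, p i.castSucc ≤ 2 * (i : ℕ)) ∧
          -(n : ℤ) ≤ (p (Fin.last n) : ℤ) - n ∧ (p (Fin.last n) : ℤ) - n ≤ n := by
      intro p hp
      have := hp (Fin.last n)
      rw [Fin.val_last] at this
      exact ⟨fun i => by simpa using hp i.castSucc, by omega, by omega⟩
    refine ⟨fun p hp => ?_, fun T' hT' => ?_⟩
    · obtain ⟨hp', h1, h2⟩ := bound p hp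
      obtain ⟨⟨T, hT, huniq⟩, hCI⟩ := ih1 _ hp'
      refine ⟨?_, fun T' hD => ?_⟩
      · obtain ⟨T', hT'⟩ := hG.exists_grow T h1 h2
        refine ⟨T', (hsucc _ _ _).2 ⟨T, hT, hT'⟩, fun R' hR' => ?_⟩
        obtain ⟨R, hR, hR'⟩ := (hsucc _ _ _).1 hR'
        obtain rfl := huniq R hR
        exact hG.unique hR' hT'
      · obtain ⟨R, hR, hR'⟩ := (hsucc _ _ _).1 hD
        exact hG.coverInclusive h1 h2 hR' (hCI R hR)
    · obtain ⟨T, s, hT, h1, h2, hgrow⟩ := hG.exists_shrink hT'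
      obtain ⟨p, ⟨hp, hD⟩, huniq⟩ := ih2 T hT
      refine ⟨Fin.snoc (α := fun _ => ℕ) p (s + n).toNat, ⟨fun i => ?_, ?_⟩, ?_⟩
      · refine Fin.lastCases ?_ (fun j => ?_) i
        · rw [Fin.snoc_last, Fin.val_last]
          omega
        · rw [Fin.snoc_castSucc, Fin.val_castSucc]
          exact hp j
      · refine (hsucc _ _ _).2 ⟨T, ?_, ?_⟩
        · simpa only [Fin.snoc_castSucc] using hD
        · rwa [Fin.snoc_last, Int.toNat_of_nonneg (by omega), add_sub_cancel_right]
      · rintro q ⟨hq, hDq⟩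
        obtain ⟨hq', h3, h4⟩ := bound q hq
        obtain ⟨R, hR, hgrow'⟩ := (hsucc _ _ _).1 hDq
        have hs : (q (Fin.last n) : ℤ) - n = s :=
          (hG.special h3 h4 hgrow').unique (hG.special h1 h2 hgrow)
        rw [hs] at hgrow'
        obtain rfl := hG.injective h1 h2 hgrow hgrow'
        have hinit := huniq _ ⟨hq', hR⟩
        funext i
        refine Fin.lastCases ?_ (fun j => ?_) i
        · rw [Fin.snoc_last]
          omega
        · rw [Fin.snoc_castSucc, ← hinit]

lemma isDTS_succ_iff (n : ℕ) (p : Fin (n + 1) → ℕ) (T' : DyckTiling (n + 1)) :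
    IsDTS (n + 1) p T' ↔ ∃ T, IsDTS n (fun i => p i.castSucc) T ∧
      StripGrowRel T ((p (Fin.last n) : ℤ) - n) T' := by
  constructor
  · rintro (_ | ⟨_, _, T, _, h1, h2⟩)
    exact ⟨T, h1, h2⟩
  · rintro ⟨T, h1, h2⟩
    exact .cons n p T T' h1 h2

lemma isDTR_succ_iff (n : ℕ) (p : Fin (n + 1) → ℕ) (T' : DyckTiling (n + 1)) :
    IsDTR (n + 1) p T' ↔ ∃ T, IsDTR n (fun i => p i.castSucc) T ∧
      RibbonGrowRel T ((p (Fin.last n) : ℤ) - n) T' := by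
  constructor
  · rintro (_ | ⟨_, _, T, _, h1, h2⟩)
    exact ⟨T, h1, h2⟩
  · rintro ⟨T, h1, h2⟩
    exact .cons n p T T' h1 h2

end Iteration

/-- The maps `DTS` and `DTR` are bijections from integer sequences
`(p_1, …, p_n)` with `0 ≤ p_i ≤ 2(i-1)` (0-indexed: `p i ≤ 2 i`) onto the set of
cover-inclusive Dyck tilings of order `n`. -/
theorem DTS_DTR_bijective (n : ℕ) :
    (∀ p : Fin n → ℕ, (∀ i, p i ≤ 2 * (i : ℕ)) →
      (∃! T : DyckTiling n, IsDTS n p T) ∧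
      (∃! T : DyckTiling n, IsDTR n p T) ∧
      (∀ T : DyckTiling n, IsDTS n p T → T.CoverInclusive) ∧
      (∀ T : DyckTiling n, IsDTR n p T → T.CoverInclusive)) ∧
    (∀ T : DyckTiling n, T.CoverInclusive →
      (∃! p : Fin n → ℕ, (∀ i, p i ≤ 2 * (i : ℕ)) ∧ IsDTS n p T) ∧
      (∃! p : Fin n → ℕ, (∀ i, p i ≤ 2 * (i : ℕ)) ∧ IsDTR n p T)) := by
  have hS := isGrowth_strip.bijective (D := IsDTS) IsDTS.nil isDTS_succ_iff n
  have hR := isGrowth_ribbon.bijective (D := IsDTR) IsDTR.nil isDTR_succ_iff n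
  exact ⟨fun p hp => ⟨(hS.1 p hp).1, (hR.1 p hp).1, (hS.1 p hp).2, (hR.1 p hp).2⟩,
    fun T hT => ⟨hS.2 T hT, hR.2 T hT⟩⟩

end
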